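/- arXiv:1212.0106 — 9 statements merged into one kernel-verified Lean document; each statement's English description precedes it below -/
import Mathlib

section
/- Let F be a CNF formula over V, let U ⊆ V, and let π : V → Bool be an autarky on U. Let γ : V → Bool be an arbitrary assignment and define τ : V → Bool by τ v = π v for v ∈ U and τ v = γ v for v ∉ U. Then sat_τ(F) = |F_U| + sat_γ(F ∖ F_U). -/
/-!
A clause of `F_U` is satisfied by `τ`, since the autarky `π` satisfies it through a variable of
`U`, where `τ = π`. A clause outside `F_U` contains only variables on which `τ = γ`, so `τ`
satisfies it exactly when `γ` does.
-/

open scoped Classical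

/-- A truth assignment `τ` satisfies a clause `c` (a finite set of literals `(v, b)`)
if some literal `(v, b) ∈ c` has `τ v = b`. -/
def Satisfies {V : Type*} (τ : V → Bool) (c : Finset (V × Bool)) : Prop :=
  ∃ l ∈ c, τ l.1 = l.2

/-- `satCount F τ` is the number of indices whose clause is satisfied by `τ`. -/
noncomputable def satCount {V I : Type*} [Fintype I]
    (F : I → Finset (V × Bool)) (τ : V → Bool) : ℕ :=
  (Finset.univ.filter fun i => Satisfies τ (F i)).card

/-- `satMax F` is the maximum of `satCount F τ` over all assignments `τ`. -/
noncomputable def satMax {V I : Type*} [Fintype V] [Fintype I]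
    (F : I → Finset (V × Bool)) : ℕ :=
  Finset.univ.sup fun τ : V → Bool => satCount F τ

/-- `M` is a matching of the formula `F`: each pair `(v, i) ∈ M` has variable `v`
occurring in clause `F i`, and the pairs have pairwise distinct variables and
pairwise distinct indices. -/
def IsMatching {V I : Type*} (F : I → Finset (V × Bool)) (M : Finset (V × I)) : Prop :=
  (∀ p ∈ M, ∃ b, (p.1, b) ∈ F p.2) ∧
  ∀ p ∈ M, ∀ q ∈ M, p ≠ q → p.1 ≠ q.1 ∧ p.2 ≠ q.2

/-- The matching number `ν(F)`: the largest size of a matching of `F`. -/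
noncomputable def matchNum {V I : Type*} [Fintype V] [Fintype I]
    (F : I → Finset (V × Bool)) : ℕ :=
  (Finset.univ.filter fun M : Finset (V × I) => IsMatching F M).sup Finset.card

section Autarky

variable {V I : Type*}

/-- The clause `c` contains a variable of `U`, so that `F_U` consists of the indices `i` with
`Touches (F i) U`. -/
def Touches (c : Finset (V × Bool)) (U : Set V) : Prop :=
  ∃ l ∈ c, l.1 ∈ U

/-- `π` is an autarky on `U` for `F`: every clause touching `U` is satisfied by `π` through a
variable of `U`. Only the values of the total assignment `π` on `U` matter. -/
def IsAutarkyOn (F : I → Finset (V × Bool)) (π : V → Bool) (U : Set V) : Prop :=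
  ∀ i, Touches (F i) U → ∃ l ∈ F i, l.1 ∈ U ∧ π l.1 = l.2

theorem satisfies_congr {c : Finset (V × Bool)} {τ γ : V → Bool}
    (h : ∀ l ∈ c, τ l.1 = γ l.1) : Satisfies τ c ↔ Satisfies γ c :=
  exists_congr fun l => and_congr_right fun hl => by rw [h l hl]

theorem satisfies_congr_of_not_touches {c : Finset (V × Bool)} {U : Set V} {τ γ : V → Bool}
    (hγ : Set.EqOn τ γ Uᶜ) (hc : ¬ Touches c U) : Satisfies τ c ↔ Satisfies γ c :=
  satisfies_congr fun l hl => hγ fun hU => hc ⟨l, hl, hU⟩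

namespace IsAutarkyOn

variable {F : I → Finset (V × Bool)} {U : Set V} {π γ τ : V → Bool}

theorem congr (h : IsAutarkyOn F π U) (hπ : Set.EqOn τ π U) : IsAutarkyOn F τ U := by
  intro i hi
  obtain ⟨l, hl, hU, hsat⟩ := h i hi
  exact ⟨l, hl, hU, (hπ hU).trans hsat⟩

theorem satisfies_of_touches (h : IsAutarkyOn F π U) {i : I} (hi : Touches (F i) U) :
    Satisfies π (F i) := by
  obtain ⟨l, hl, -, hsat⟩ := h i hi
  exact ⟨l, hl, hsat⟩

theorem satisfies_iff (h : IsAutarkyOn F π U) (hπ : Set.EqOn τ π U) (hγ : Set.EqOn τ γ Uᶜ)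
    (i : I) :
    Satisfies τ (F i) ↔ Touches (F i) U ∨ ¬ Touches (F i) U ∧ Satisfies γ (F i) := by
  by_cases hi : Touches (F i) U
  · simp only [hi, (h.congr hπ).satisfies_of_touches hi, true_or]
  · simp only [hi, satisfies_congr_of_not_touches hγ hi, not_false_eq_true, true_and, false_or]

end IsAutarkyOn

theorem stmt2_general [Fintype I] {F : I → Finset (V × Bool)} {U : Set V} {π γ τ : V → Bool}
    (haut : IsAutarkyOn F π U) (hπ : Set.EqOn τ π U) (hγ : Set.EqOn τ γ Uᶜ) :
    satCount F τ =
      (Finset.univ.filter fun i : I => Touches (F i) U).card +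
      (Finset.univ.filter fun i : I => ¬ Touches (F i) U ∧ Satisfies γ (F i)).card := by
  have hdisj : Disjoint (Finset.univ.filter fun i : I => Touches (F i) U)
      (Finset.univ.filter fun i : I => ¬ Touches (F i) U ∧ Satisfies γ (F i)) :=
    Finset.disjoint_filter.2 fun _ _ hi hi' => hi'.1 hi
  simp only [satCount, haut.satisfies_iff hπ hγ, Finset.filter_or,
    Finset.card_union_of_disjoint hdisj]

end Autarky

/-- Autarky lemma: if `π` is an autarky on `U` and `τ` agrees with `π` on `U` and
with `γ` off `U`, then `sat_τ(F) = |F_U| + sat_γ(F ∖ F_U)`. -/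
theorem stmt2 {V I : Type*} [Fintype V] [Fintype I] (F : I → Finset (V × Bool))
    (hne : ∀ i, (F i).Nonempty)
    (hone : ∀ i v b b', (v, b) ∈ F i → (v, b') ∈ F i → b = b')
    (U : Finset V) (π γ τ : V → Bool)
    (haut : ∀ i : I, (∃ l ∈ F i, l.1 ∈ U) → ∃ l ∈ F i, l.1 ∈ U ∧ π l.1 = l.2)
    (hτ : ∀ v, τ v = if v ∈ U then π v else γ v) :
    satCount F τ =
      (Finset.univ.filter fun i : I => ∃ l ∈ F i, l.1 ∈ U).card +
      (Finset.univ.filter fun i : I => (¬ ∃ l ∈ F i, l.1 ∈ U) ∧ Satisfies γ (F i)).card := by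
  convert stmt2_general (U := (U : Set V)) haut (fun v hv => (hτ v).trans (if_pos hv))
    (fun v hv => (hτ v).trans (if_neg hv))
  all_goals rfl
end

section
/- Let F be a CNF formula and x a variable with n(x) = 0, i.e., no clause of F contains the positive literal (x, true). Let F' be the subfamily of F consisting of those indices whose clause does not contain the literal (x, false). Then sat(F) = sat(F') + n(x̄). -/
/-!
Setting `x` to `b` costs nothing when the literal `(x, !b)` does not occur: every clause satisfied
by an assignment stays satisfied, and every clause containing `(x, b)` becomes satisfied. Hence an
optimal assignment for the clauses avoiding `(x, b)` can be changed at `x` so that it also satisfies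
all the remaining clauses.
-/

open scoped Classical

section Satisfies

variable {V : Type*} {τ : V → Bool} {c : Finset (V × Bool)} {x : V} {b : Bool}

theorem Satisfies.update_of_mem (h : (x, b) ∈ c) : Satisfies (Function.update τ x b) c :=
  ⟨(x, b), h, Function.update_self x b τ⟩

theorem Satisfies.update_of_notMem_not (hx : (x, !b) ∉ c) (h : Satisfies τ c) :
    Satisfies (Function.update τ x b) c := by
  obtain ⟨⟨v, b'⟩, hmem, hv⟩ := h
  obtain rfl | hvx := eq_or_ne v x
  · obtain rfl : b' = b := by
      by_contra hne
      exact hx (Bool.eq_not_of_ne hne ▸ hmem)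
    exact .update_of_mem hmem
  · exact ⟨(v, b'), hmem, (Function.update_of_ne hvx b τ).trans hv⟩

end Satisfies

section satCount

variable {V I : Type*} [Fintype I] {F : I → Finset (V × Bool)} {τ σ : V → Bool}

theorem satCount_mono (h : ∀ i, Satisfies τ (F i) → Satisfies σ (F i)) :
    satCount F τ ≤ satCount F σ :=
  Finset.card_le_card (Finset.monotone_filter_right _ fun i _ => h i)

theorem satCount_le_card (F : I → Finset (V × Bool)) (τ : V → Bool) :
    satCount F τ ≤ Fintype.card I :=
  Finset.card_le_univ _

theorem satCount_eq_card (h : ∀ i, Satisfies τ (F i)) : satCount F τ = Fintype.card I := by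
  rw [satCount, Finset.filter_true_of_mem fun i _ => h i, Finset.card_univ]

theorem satCount_subtype_add_satCount_subtype_not (F : I → Finset (V × Bool)) (τ : V → Bool)
    (p : I → Prop) [DecidablePred p] :
    satCount (fun i : {i // p i} => F i) τ + satCount (fun i : {i // ¬p i} => F i) τ =
      satCount F τ := by
  simp only [satCount, Finset.card_filter]
  exact Fintype.sum_subtype_add_sum_subtype p fun i => if Satisfies τ (F i) then 1 else 0

end satCount

section satMax

variable {V I : Type*} [Fintype V] [Fintype I]

theorem satCount_le_satMax (F : I → Finset (V × Bool)) (τ : V → Bool) :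
    satCount F τ ≤ satMax F :=
  Finset.le_sup (f := satCount F) (Finset.mem_univ τ)

theorem exists_satCount_eq_satMax (F : I → Finset (V × Bool)) : ∃ τ, satCount F τ = satMax F := by
  obtain ⟨τ, -, hτ⟩ := Finset.exists_mem_eq_sup Finset.univ Finset.univ_nonempty (satCount F)
  exact ⟨τ, hτ.symm⟩

theorem satMax_le_satMax_subtype_not_add_card (F : I → Finset (V × Bool)) (p : I → Prop)
    [DecidablePred p] :
    satMax F ≤ satMax (fun i : {i // ¬p i} => F i) + Fintype.card {i // p i} := by
  obtain ⟨τ, hτ⟩ := exists_satCount_eq_satMax F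
  rw [← hτ, ← satCount_subtype_add_satCount_subtype_not F τ p, add_comm]
  exact add_le_add (satCount_le_satMax _ τ) (satCount_le_card _ τ)

theorem satMax_subtype_notMem_add_card_le (F : I → Finset (V × Bool)) (x : V) (b : Bool)
    (hx : ∀ i, (x, !b) ∉ F i) :
    satMax (fun i : {i // (x, b) ∉ F i} => F i) + Fintype.card {i // (x, b) ∈ F i} ≤
      satMax F := by
  obtain ⟨τ, hτ⟩ := exists_satCount_eq_satMax fun i : {i // (x, b) ∉ F i} => F i
  let σ := Function.update τ x b
  have h_avoid : satMax (fun i : {i // (x, b) ∉ F i} => F i) ≤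
      satCount (fun i : {i // (x, b) ∉ F i} => F i) σ :=
    hτ ▸ satCount_mono fun i => .update_of_notMem_not (hx i)
  have h_contain : satCount (fun i : {i // (x, b) ∈ F i} => F i) σ =
      Fintype.card {i // (x, b) ∈ F i} :=
    satCount_eq_card fun i => .update_of_mem i.2
  calc satMax (fun i : {i // (x, b) ∉ F i} => F i) + Fintype.card {i // (x, b) ∈ F i}
      ≤ satCount (fun i : {i // (x, b) ∉ F i} => F i) σ +
          satCount (fun i : {i // (x, b) ∈ F i} => F i) σ :=
        add_le_add h_avoid h_contain.ge
    _ = satCount F σ := by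
        rw [add_comm, satCount_subtype_add_satCount_subtype_not F σ fun i => (x, b) ∈ F i]
    _ ≤ satMax F := satCount_le_satMax F σ

theorem stmt3_general (F : I → Finset (V × Bool)) (x : V) (b : Bool)
    (hx : ∀ i, (x, !b) ∉ F i) :
    satMax F =
      satMax (fun i : {i : I // (x, b) ∉ F i} => F i.1) +
      (Finset.univ.filter fun i : I => (x, b) ∈ F i).card := by
  rw [← Fintype.card_subtype]
  exact le_antisymm (satMax_le_satMax_subtype_not_add_card F fun i => (x, b) ∈ F i)
    (satMax_subtype_notMem_add_card_le F x b hx)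

end satMax

/-- Reduction Rule 1: if no clause contains the positive literal `(x, true)`, and `F'`
is the subfamily of clauses not containing `(x, false)`, then `sat(F) = sat(F') + n(x̄)`. -/
theorem stmt3 {V I : Type*} [Fintype V] [Fintype I] (F : I → Finset (V × Bool))
    (hne : ∀ i, (F i).Nonempty)
    (hone : ∀ i v b b', (v, b) ∈ F i → (v, b') ∈ F i → b = b')
    (x : V) (hx : ∀ i, (x, true) ∉ F i) :
    satMax F =
      satMax (fun i : {i : I // (x, false) ∉ F i} => F i.1) +
      (Finset.univ.filter fun i : I => (x, false) ∈ F i).card :=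
  stmt3_general F x false hx
end

section
/- Let F be a CNF formula and x a variable with n(x) = n(x̄) = 1; let i' and i'' be the (necessarily distinct) indices of the clauses c' and c'' containing the literals (x, true) and (x, false) respectively. Let c* = (c' ∖ {(x, true)}) ∪ (c'' ∖ {(x, false)}), and let F' be the formula obtained from F by deleting the indices i' and i'' and adding one new index carrying the clause c* (c* may be empty; an empty clause is satisfied by no assignment). Then sat(F) = sat(F') + 1. -/
/-!
Resolution is sound: an assignment satisfying both `c'` and `c''` falsifies the `x`-literal of one
of them, hence makes another literal of that clause, which belongs to `c*`, true. So passing from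
`F` to `F'` loses at most one satisfied clause. Conversely, the other clauses do not mention `x`,
so they keep their truth values when the value of `x` is changed. One choice of it satisfies `c'`,
and if `c*` is satisfied by a literal of one of `c'`, `c''`, then `x` can be set so as to satisfy
the other one too. Either way one clause is gained.
-/

open scoped Classical

section Clause

variable {V : Type*} {τ : V → Bool} {c d : Finset (V × Bool)} {x : V} {b : Bool}

theorem Satisfies.mono (hcd : c ⊆ d) : Satisfies τ c → Satisfies τ d :=
  fun ⟨l, hl, hτ⟩ => ⟨l, hcd hl, hτ⟩

theorem satisfies_union : Satisfies τ (c ∪ d) ↔ Satisfies τ c ∨ Satisfies τ d := by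
  simp only [Satisfies, Finset.mem_union, or_and_right, exists_or]

theorem Satisfies.sdiff_singleton (hc : Satisfies τ c) (hx : τ x ≠ b) :
    Satisfies τ (c \ {(x, b)}) := by
  obtain ⟨l, hl, hτ⟩ := hc
  refine ⟨l, Finset.mem_sdiff.2 ⟨hl, ?_⟩, hτ⟩
  rw [Finset.mem_singleton]
  rintro rfl
  exact hx hτ

theorem satisfies_update_of_mem (τ : V → Bool) (hx : (x, b) ∈ c) :
    Satisfies (Function.update τ x b) c :=
  ⟨(x, b), hx, Function.update_self x b τ⟩

theorem satisfies_update_iff_of_forall_notMem (hx : ∀ a, (x, a) ∉ c) :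
    Satisfies (Function.update τ x b) c ↔ Satisfies τ c := by
  refine exists_congr fun l => and_congr_right fun hl => ?_
  have hlx : l.1 ≠ x := fun h => hx l.2 (h ▸ hl)
  rw [Function.update_of_ne hlx]

theorem Satisfies.update_of_sdiff_singleton (hc : Satisfies τ (c \ {(x, !b)})) :
    Satisfies (Function.update τ x b) c := by
  by_cases hx : (x, b) ∈ c
  · exact satisfies_update_of_mem τ hx
  · have hfree : ∀ a, (x, a) ∉ c \ {(x, !b)} := by
      cases b <;> simp [hx]
    exact ((satisfies_update_iff_of_forall_notMem hfree).2 hc).mono Finset.sdiff_subset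

/-- The resolvent on `x` of a clause `c` containing `x` and a clause `d` containing `x̄`; this is
the clause `c*`. -/
noncomputable def resolventClause (x : V) (c d : Finset (V × Bool)) : Finset (V × Bool) :=
  (c \ {(x, true)}) ∪ (d \ {(x, false)})

theorem Satisfies.resolventClause (x : V) (hc : Satisfies τ c) (hd : Satisfies τ d) :
    Satisfies τ (resolventClause x c d) := by
  refine satisfies_union.2 ?_
  cases hx : τ x
  · exact Or.inl (hc.sdiff_singleton (by simp [hx]))
  · exact Or.inr (hd.sdiff_singleton (by simp [hx]))

theorem exists_update_satisfies_of_resolventClause (hxc : (x, true) ∈ c) (hxd : (x, false) ∈ d)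
    (h : Satisfies τ (resolventClause x c d)) :
    ∃ b, Satisfies (Function.update τ x b) c ∧ Satisfies (Function.update τ x b) d := by
  rcases satisfies_union.1 h with hc | hd
  · exact ⟨false, .update_of_sdiff_singleton hc, satisfies_update_of_mem τ hxd⟩
  · exact ⟨true, satisfies_update_of_mem τ hxc, .update_of_sdiff_singleton hd⟩

end Clause

/-- The formula `F'` obtained from `F` by replacing the clauses at `i'` and `i''` by their
resolvent on `x`. The summand `Unit` carries the new index. -/
noncomputable def resolventFormula {V I : Type*} (F : I → Finset (V × Bool)) (x : V) (i' i'' : I) :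
    {i // i ≠ i' ∧ i ≠ i''} ⊕ Unit → Finset (V × Bool) :=
  Sum.elim (fun i => F i) fun _ => resolventClause x (F i') (F i'')

section Formula

variable {V I : Type*} [Fintype I] (F : I → Finset (V × Bool)) (τ : V → Bool) {x : V} {i' i'' : I}

theorem satCount_eq_sum : satCount F τ = ∑ i, if Satisfies τ (F i) then 1 else 0 :=
  Finset.card_filter _ _

theorem satCount_eq_satCount_subtype_add (hii : i' ≠ i'') :
    satCount F τ = satCount (fun i : {i // i ≠ i' ∧ i ≠ i''} => F i) τ +
      ((if Satisfies τ (F i') then 1 else 0) + if Satisfies τ (F i'') then 1 else 0) := by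
  rw [satCount_eq_sum, satCount_eq_sum,
    ← Finset.sum_subtype (Finset.univ \ {i', i''}) (by simp)
      (fun i => if Satisfies τ (F i) then 1 else 0),
    ← Finset.sum_pair (f := fun i => if Satisfies τ (F i) then 1 else 0) hii]
  exact (Finset.sum_sdiff (Finset.subset_univ _)).symm

variable {F} in
theorem satCount_update_of_forall_notMem (hx : ∀ i a, (x, a) ∉ F i) (b : Bool) :
    satCount F (Function.update τ x b) = satCount F τ := by
  simp only [satCount, satisfies_update_iff_of_forall_notMem (hx _)]

theorem bddAbove_range_satCount : BddAbove (Set.range (satCount F)) :=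
  ⟨Fintype.card I, Set.forall_mem_range.2 fun _ => Finset.card_le_univ _⟩

theorem exists_satCount_eq_iSup : ∃ τ, satCount F τ = ⨆ σ, satCount F σ :=
  Nat.sSup_mem (Set.range_nonempty _) (bddAbove_range_satCount F)

theorem satMax_eq_iSup [Fintype V] : satMax F = ⨆ τ, satCount F τ :=
  Finset.sup_univ_eq_ciSup _

theorem satCount_resolventFormula (x : V) (i' i'' : I) :
    satCount (resolventFormula F x i' i'') τ =
      satCount (fun i : {i // i ≠ i' ∧ i ≠ i''} => F i) τ +
        if Satisfies τ (resolventClause x (F i') (F i'')) then 1 else 0 := by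
  rw [satCount_eq_sum, satCount_eq_sum, Fintype.sum_sum_type, Fintype.sum_unique (ι := Unit)]
  rfl

theorem satCount_le_satCount_resolventFormula_add_one (x : V) (hii : i' ≠ i'') :
    satCount F τ ≤ satCount (resolventFormula F x i' i'') τ + 1 := by
  rw [satCount_eq_satCount_subtype_add F τ hii, satCount_resolventFormula]
  have hsound : Satisfies τ (F i') → Satisfies τ (F i'') →
      Satisfies τ (resolventClause x (F i') (F i'')) := Satisfies.resolventClause x
  grind

variable {F} in
theorem exists_satCount_resolventFormula_add_one_le (hii : i' ≠ i'')
    (hxc : (x, true) ∈ F i') (hxd : (x, false) ∈ F i'')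
    (hfree : ∀ i, i ≠ i' → i ≠ i'' → ∀ a, (x, a) ∉ F i) :
    ∃ σ, satCount (resolventFormula F x i' i'') τ + 1 ≤ satCount F σ := by
  suffices ∃ b, (if Satisfies τ (resolventClause x (F i') (F i'')) then 1 else 0) + 1 ≤
      (if Satisfies (Function.update τ x b) (F i') then 1 else 0) +
        if Satisfies (Function.update τ x b) (F i'') then 1 else 0 by
    obtain ⟨b, hb⟩ := this
    refine ⟨Function.update τ x b, ?_⟩
    rw [satCount_resolventFormula, satCount_eq_satCount_subtype_add F _ hii,
      satCount_update_of_forall_notMem τ fun i : {i // i ≠ i' ∧ i ≠ i''} => hfree i i.2.1 i.2.2,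
      add_assoc]
    exact Nat.add_le_add_left hb _
  by_cases h : Satisfies τ (resolventClause x (F i') (F i''))
  · obtain ⟨b, hc, hd⟩ := exists_update_satisfies_of_resolventClause hxc hxd h
    exact ⟨b, by simp [h, hc, hd]⟩
  · exact ⟨true, by simp [h, satisfies_update_of_mem τ hxc]⟩

end Formula

theorem stmt4_general {V I : Type*} [Fintype I] (F : I → Finset (V × Bool))
    (x : V) (i' i'' : I) (hii : i' ≠ i'') (hxc : (x, true) ∈ F i') (hxd : (x, false) ∈ F i'')
    (hfree : ∀ i, i ≠ i' → i ≠ i'' → ∀ a, (x, a) ∉ F i) :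
    ⨆ τ, satCount F τ = (⨆ τ, satCount (resolventFormula F x i' i'') τ) + 1 := by
  apply le_antisymm
  · refine ciSup_le fun τ => (satCount_le_satCount_resolventFormula_add_one F τ x hii).trans ?_
    exact Nat.add_le_add_right (le_ciSup (bddAbove_range_satCount _) τ) 1
  · obtain ⟨τ, hτ⟩ := exists_satCount_eq_iSup (resolventFormula F x i' i'')
    obtain ⟨σ, hσ⟩ := exists_satCount_resolventFormula_add_one_le τ hii hxc hxd hfree
    exact hτ ▸ hσ.trans (le_ciSup (bddAbove_range_satCount F) σ)

/-- Reduction Rule 2: if `n(x) = n(x̄) = 1`, with `(x, true)` occurring only in clause `i'`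
and `(x, false)` only in clause `i''`, then replacing these two clauses by the single
clause `c* = (F i' ∖ {(x,true)}) ∪ (F i'' ∖ {(x,false)})` decreases `sat` by exactly 1. -/
theorem stmt4 {V I : Type*} [Fintype V] [Fintype I] (F : I → Finset (V × Bool))
    (hne : ∀ i, (F i).Nonempty)
    (hone : ∀ i v b b', (v, b) ∈ F i → (v, b') ∈ F i → b = b')
    (x : V) (i' i'' : I) (hii : i' ≠ i'')
    (hpos : ∀ i, (x, true) ∈ F i ↔ i = i')
    (hneg : ∀ i, (x, false) ∈ F i ↔ i = i'') :
    satMax F =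
      satMax (fun j : {i : I // i ≠ i' ∧ i ≠ i''} ⊕ Unit =>
        match j with
        | Sum.inl i => F i.1
        | Sum.inr _ => (F i' \ {(x, true)}) ∪ (F i'' \ {(x, false)})) + 1 := by
  rw [satMax_eq_iSup, satMax_eq_iSup]
  convert stmt4_general F x i' i'' hii ((hpos i').2 rfl) ((hneg i'').2 rfl) fun i hi' hi'' =>
    Bool.forall_bool.2 ⟨mt (hneg i).1 hi'', mt (hpos i).1 hi'⟩ using 5 with τ
  exact funext <| Sum.rec (fun _ => rfl) fun _ => rfl
end

section
/- For every CNF formula F over V there exist a set U ⊆ V and an assignment π : V → Bool that is an autarky on U such that the subfamily F ∖ F_U (the clauses of F containing no variable of U) is 1-expanding. -/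
/-!
Call a formula lean if its autarkies touch no clause. Composing an autarky with an autarky of the
clauses it does not touch gives a larger autarky, so a maximal autarky, which exists by Zorn's
lemma, leaves a lean formula.

A lean formula is 1-expanding: consider a minimal nonempty set `X` of occurring variables with
`|F_X| ≤ |X|`. If `S ⊆ F_X` is nonempty and `N ⊆ X` is the set of variables of `X` occurring in
`S`, then `F_{X ∖ N} ⊆ F_X ∖ S`, and minimality gives `|S| ≤ |F_X| - |F_{X ∖ N}| ≤ |N|`. By Hall's
theorem the clauses of `F_X` can be assigned distinct variables of `X` occurring in them, and
setting each of these variables so as to satisfy its clause is an autarky touching all of `F_X`.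
-/

open scoped Classical

section Autarky

variable {V I : Type*}

/-- The index set `F_X` of the clauses of `F` in which a variable of `X` occurs. Here and below
clauses are arbitrary, possibly infinite, sets of literals. -/
def clausesMeeting (F : I → Set (V × Bool)) (X : Set V) : Set I :=
  {i | ∃ l ∈ F i, l.1 ∈ X}

/-- The subfamily `F ∖ F_X` of the clauses of `F` in which no variable of `X` occurs. -/
def remainder (F : I → Set (V × Bool)) (X : Set V) : ↥(clausesMeeting F X)ᶜ → Set (V × Bool) :=
  fun i => F i

/-- An autarky of `F`, encoded as the set `L` of literals it makes true, so that it is an autarky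
on the set of variables `Prod.fst '' L` and autarkies are ordered by inclusion. -/
structure IsAutarky (F : I → Set (V × Bool)) (L : Set (V × Bool)) : Prop where
  injOn_fst : Set.InjOn Prod.fst L
  inter_nonempty : ∀ i ∈ clausesMeeting F (Prod.fst '' L), (F i ∩ L).Nonempty

/-- A lean formula: one whose autarkies touch none of its clauses. -/
def IsAutarkyFree (F : I → Set (V × Bool)) : Prop :=
  ∀ L, IsAutarky F L → clausesMeeting F (Prod.fst '' L) = ∅

/-- A `q`-expanding formula: every nonempty finite set `X` of occurring variables meets at least
`|X| + q` clauses, a number that may be infinite. -/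
def IsExpanding (q : ℕ) (F : I → Set (V × Bool)) : Prop :=
  ∀ X : Finset V, X.Nonempty → (∀ x ∈ X, ∃ i b, (x, b) ∈ F i) →
    (X.card + q : ℕ∞) ≤ (clausesMeeting F X).encard

variable {F : I → Set (V × Bool)}

theorem clausesMeeting_mono {X Y : Set V} (h : X ⊆ Y) :
    clausesMeeting F X ⊆ clausesMeeting F Y :=
  fun _ ⟨l, hl, hlX⟩ => ⟨l, hl, h hlX⟩

theorem image_val_clausesMeeting_remainder (U X : Set V) :
    Subtype.val '' clausesMeeting (remainder F U) X =
      {i | (¬ ∃ l ∈ F i, l.1 ∈ U) ∧ ∃ l ∈ F i, l.1 ∈ X} := by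
  ext i
  exact ⟨fun ⟨j, hj, hji⟩ => hji ▸ ⟨j.2, hj⟩, fun ⟨hU, hX⟩ => ⟨⟨i, hU⟩, hX, rfl⟩⟩

theorem IsAutarky.union_remainder {L L' : Set (V × Bool)} (hL : IsAutarky F L)
    (hL' : IsAutarky (remainder F (Prod.fst '' L)) L') :
    IsAutarky F (L ∪ {l ∈ L' | l.1 ∉ Prod.fst '' L}) where
  injOn_fst := by
    rintro l (hl | ⟨hl, hlL⟩) m (hm | ⟨hm, hmL⟩) hlm
    · exact hL.injOn_fst hl hm hlm
    · exact absurd ⟨l, hl, hlm⟩ hmL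
    · exact absurd ⟨m, hm, hlm.symm⟩ hlL
    · exact hL'.injOn_fst hl hm hlm
  inter_nonempty := by
    rintro i ⟨l, hl, m, hm, hml⟩
    by_cases hi : i ∈ clausesMeeting F (Prod.fst '' L)
    · exact (hL.inter_nonempty i hi).mono (Set.inter_subset_inter_right _ Set.subset_union_left)
    · have hm' : m ∈ L' := hm.elim (fun h => absurd ⟨l, hl, m, h, hml⟩ hi) And.left
      obtain ⟨k, hk, hkL'⟩ := hL'.inter_nonempty ⟨i, hi⟩ ⟨l, hl, m, hm', hml⟩
      exact ⟨k, hk, .inr ⟨hkL', fun hkL => hi ⟨k, hk, hkL⟩⟩⟩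

theorem isAutarkyFree_remainder_of_maximal {L : Set (V × Bool)} (hL : Maximal (IsAutarky F) L) :
    IsAutarkyFree (remainder F (Prod.fst '' L)) := by
  refine fun L' hL' => Set.eq_empty_of_forall_notMem fun i hi => ?_
  obtain ⟨l, hl, hlL'⟩ := hL'.inter_nonempty i hi
  have hlL : l.1 ∉ Prod.fst '' L := fun h => i.2 ⟨l, hl, h⟩
  exact hlL ⟨l, hL.le_of_ge (hL.prop.union_remainder hL') Set.subset_union_left
    (.inr ⟨hlL', hlL⟩), rfl⟩

theorem IsAutarky.sUnion {c : Set (Set (V × Bool))} (hc : IsChain (· ⊆ ·) c)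
    (h : ∀ L ∈ c, IsAutarky F L) : IsAutarky F (⋃₀ c) where
  injOn_fst := by
    rintro l ⟨L, hL, hl⟩ m ⟨M, hM, hm⟩ hlm
    obtain hLM | hML := hc.total hL hM
    · exact (h M hM).injOn_fst (hLM hl) hm hlm
    · exact (h L hL).injOn_fst hl (hML hm) hlm
  inter_nonempty := by
    rintro i ⟨l, hl, m, ⟨L, hL, hm⟩, hml⟩
    exact ((h L hL).inter_nonempty i ⟨l, hl, m, hm, hml⟩).mono
      (Set.inter_subset_inter_right _ (Set.subset_sUnion_of_mem hL))

variable (F) in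
theorem exists_maximal_isAutarky : ∃ L, Maximal (IsAutarky F) L :=
  zorn_subset {L | IsAutarky F L} fun c hc hchain =>
    ⟨⋃₀ c, IsAutarky.sUnion hchain hc, fun _ => Set.subset_sUnion_of_mem⟩

theorem encard_clausesMeeting_sdiff_add_encard_le {X N : Set V} {S : Set I}
    (hS : S ⊆ clausesMeeting F X) (hN : ∀ i ∈ S, ∀ l ∈ F i, l.1 ∈ X → l.1 ∈ N) :
    (clausesMeeting F (X \ N)).encard + S.encard ≤ (clausesMeeting F X).encard := by
  have hdisj : Disjoint (clausesMeeting F (X \ N)) S :=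
    Set.disjoint_left.mpr fun i ⟨l, hl, hlX, hlN⟩ hi => hlN (hN i hi l hl hlX)
  rw [← Set.encard_union_eq hdisj]
  exact Set.encard_le_encard (Set.union_subset (clausesMeeting_mono Set.sdiff_subset) hS)

theorem exists_injective_of_encard_clausesMeeting_le {X : Finset V}
    (hX : (clausesMeeting F X).encard ≤ X.card)
    (hmin : ∀ Y ⊂ X, (Y.card : ℕ∞) ≤ (clausesMeeting F Y).encard) :
    ∃ f : clausesMeeting F X → V, Function.Injective f ∧ ∀ i, f i ∈ X ∧ ∃ b, (f i, b) ∈ F i := by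
  let t (i : clausesMeeting F X) : Finset V := X.filter fun v => ∃ b, (v, b) ∈ F i
  suffices hall : ∀ S : Finset (clausesMeeting F X), S.card ≤ (S.biUnion t).card by
    obtain ⟨f, hf, hft⟩ := (Finset.all_card_le_biUnion_card_iff_exists_injective t).mp hall
    exact ⟨f, hf, fun i => Finset.mem_filter.mp (hft i)⟩
  intro S
  obtain rfl | ⟨i, hi⟩ := S.eq_empty_or_nonempty
  · simp
  set N := S.biUnion t
  have hNX : N ⊆ X := Finset.biUnion_subset.mpr fun _ _ => Finset.filter_subset _ _
  have occurs_mem_N {j} (hj : j ∈ S) {l} (hl : l ∈ F j) (hlX : l.1 ∈ X) : l.1 ∈ N :=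
    Finset.mem_biUnion.mpr ⟨j, hj, Finset.mem_filter.mpr ⟨hlX, l.2, hl⟩⟩
  have hNne : N.Nonempty := by
    obtain ⟨l, hl, hlX⟩ := i.2
    exact ⟨l.1, occurs_mem_N hi hl hlX⟩
  have hcard : ((X \ N).card + S.card : ℕ∞) ≤ (X \ N).card + N.card := calc
    _ ≤ (clausesMeeting F ↑(X \ N)).encard + S.card := by
      gcongr
      exact hmin _ (Finset.sdiff_ssubset hNX hNne)
    _ = (clausesMeeting F (X \ N : Set V)).encard + (Subtype.val '' (S : Set _)).encard := by
      rw [Finset.coe_sdiff, Subtype.val_injective.encard_image, Set.encard_coe_eq_coe_finsetCard]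
    _ ≤ (clausesMeeting F X).encard :=
      encard_clausesMeeting_sdiff_add_encard_le (Subtype.coe_image_subset _ _) <| by
        rintro _ ⟨j, hj, rfl⟩ l hl hlX
        exact occurs_mem_N hj hl hlX
    _ ≤ X.card := hX
    _ = (X \ N).card + N.card := mod_cast (Finset.card_sdiff_add_card_eq_card hNX).symm
  exact_mod_cast (ENat.add_le_add_iff_left (ENat.natCast_ne_top _)).mp hcard

theorem IsAutarkyFree.clausesMeeting_eq_empty_of_injective (hF : IsAutarkyFree F) {X : Set V}
    {f : clausesMeeting F X → V} (hf : Function.Injective f)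
    (hfX : ∀ i, f i ∈ X ∧ ∃ b, (f i, b) ∈ F i) : clausesMeeting F X = ∅ := by
  choose hmem b hb using hfX
  let L : Set (V × Bool) := Set.range fun i => (f i, b i)
  have hL : IsAutarky F L :=
    { injOn_fst := by
        rintro _ ⟨i, rfl⟩ _ ⟨j, rfl⟩ hij
        rw [hf hij]
      inter_nonempty := by
        rintro i ⟨l, hl, _, ⟨j, rfl⟩, hjl⟩
        have hi : i ∈ clausesMeeting F X := ⟨l, hl, hjl ▸ hmem j⟩
        exact ⟨_, hb ⟨i, hi⟩, ⟨i, hi⟩, rfl⟩ }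
  refine Set.eq_empty_of_forall_notMem fun i hi => ?_
  have hiL : i ∈ clausesMeeting F (Prod.fst '' L) := ⟨_, hb ⟨i, hi⟩, _, ⟨⟨i, hi⟩, rfl⟩, rfl⟩
  exact (hF L hL).le hiL

theorem IsAutarkyFree.isExpanding_one (hF : IsAutarkyFree F) : IsExpanding 1 F := by
  intro X
  induction X using Finset.strongInduction with
  | H X ih =>
    intro hX hocc
    by_contra! hlt
    have hle : (clausesMeeting F X).encard ≤ X.card := Order.le_of_lt_add_one hlt
    have hmin (Y : Finset V) (hY : Y ⊂ X) : (Y.card : ℕ∞) ≤ (clausesMeeting F Y).encard := by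
      obtain rfl | hYne := Y.eq_empty_or_nonempty
      · simp
      · exact le_self_add.trans (ih Y hY hYne fun x hx => hocc x (hY.subset hx))
    obtain ⟨f, hf, hfX⟩ := exists_injective_of_encard_clausesMeeting_le hle hmin
    obtain ⟨x, hx⟩ := hX
    obtain ⟨i, b, hi⟩ := hocc x hx
    exact (hF.clausesMeeting_eq_empty_of_injective hf hfX).le ⟨(x, b), hi, hx⟩

theorem IsAutarky.exists_assignment {L : Set (V × Bool)} (hL : IsAutarky F L) :
    ∃ π : V → Bool, ∀ i ∈ clausesMeeting F (Prod.fst '' L),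
      ∃ l ∈ F i, l.1 ∈ Prod.fst '' L ∧ π l.1 = l.2 := by
  have hπ (v : V) : ∃ b, ∀ b', (v, b') ∈ L → b = b' := by
    by_cases hv : ∃ b, (v, b) ∈ L
    · obtain ⟨b, hb⟩ := hv
      exact ⟨b, fun b' hb' => congrArg Prod.snd (hL.injOn_fst hb hb' rfl)⟩
    · exact ⟨true, fun b' hb' => absurd ⟨b', hb'⟩ hv⟩
  choose π hπ using hπ
  refine ⟨π, fun i hi => ?_⟩
  obtain ⟨l, hl, hlL⟩ := hL.inter_nonempty i hi
  exact ⟨l, hl, Set.mem_image_of_mem _ hlL, hπ l.1 l.2 hlL⟩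

end Autarky

theorem stmt5_general {V I : Type*} (F : I → Set (V × Bool)) :
    ∃ (U : Set V) (π : V → Bool),
      (∀ i : I, (∃ l ∈ F i, l.1 ∈ U) → ∃ l ∈ F i, l.1 ∈ U ∧ π l.1 = l.2) ∧
      ∀ X : Finset V, X.Nonempty →
        (∀ x ∈ X, ∃ i : I, (¬ ∃ l ∈ F i, l.1 ∈ U) ∧ ∃ b, (x, b) ∈ F i) →
        (X.card + 1 : ℕ∞) ≤
          {i : I | (¬ ∃ l ∈ F i, l.1 ∈ U) ∧ ∃ l ∈ F i, l.1 ∈ X}.encard := by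
  obtain ⟨L, hL⟩ := exists_maximal_isAutarky F
  obtain ⟨π, hπ⟩ := hL.prop.exists_assignment
  refine ⟨Prod.fst '' L, π, hπ, fun X hX hocc => ?_⟩
  have hexp := (isAutarkyFree_remainder_of_maximal hL).isExpanding_one X hX fun x hx =>
    let ⟨i, hi, hx⟩ := hocc x hx
    ⟨⟨i, hi⟩, hx⟩
  rw [← Subtype.val_injective.encard_image, image_val_clausesMeeting_remainder] at hexp
  exact_mod_cast hexp

/-- For every CNF formula `F` there exist a set `U` of variables and an assignment `π`
that is an autarky on `U` such that the subfamily `F ∖ F_U` is 1-expanding. -/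
theorem stmt5 {V I : Type*} [Fintype V] [Fintype I] (F : I → Finset (V × Bool))
    (hne : ∀ i, (F i).Nonempty)
    (hone : ∀ i v b b', (v, b) ∈ F i → (v, b') ∈ F i → b = b') :
    ∃ (U : Finset V) (π : V → Bool),
      (∀ i : I, (∃ l ∈ F i, l.1 ∈ U) → ∃ l ∈ F i, l.1 ∈ U ∧ π l.1 = l.2) ∧
      ∀ X : Finset V, X.Nonempty →
        (∀ x ∈ X, ∃ i : I, (¬ ∃ l ∈ F i, l.1 ∈ U) ∧ ∃ b, (x, b) ∈ F i) →
        X.card + 1 ≤ (Finset.univ.filter fun i : I =>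
          (¬ ∃ l ∈ F i, l.1 ∈ U) ∧ ∃ l ∈ F i, l.1 ∈ X).card := by
  obtain ⟨U, π, hπ, hexp⟩ := stmt5_general fun i => (F i : Set (V × Bool))
  refine ⟨U.toFinset, π, by simpa using hπ, fun X hX hocc => ?_⟩
  have hle := hexp X hX (by simpa using hocc)
  rw [← Nat.cast_le (α := ℕ∞), ← Set.encard_coe_eq_coe_finsetCard]
  simpa using hle
end

section
/- Let F be a CNF formula and let x ≠ y be variables with n(x) = n(y) = 1, such that some clause of F contains both positive literals (x, true) and (y, true). Then there exists an assignment τ with sat_τ(F) = sat(F) such that τ x = false or τ y = false. -/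
/-!
An assignment satisfying a literal `(x, a)` can be flipped at `x`; the only clauses that may be lost
are those containing `(x, a)`. If all of these also contain a literal `(y, b)` that the assignment
satisfies, then `(y, b)` keeps satisfying them. Hence an optimal assignment satisfying both literals
remains optimal after the flip. When `(x, true)` occurs only once, in a clause that also contains
`(y, true)`, the literals `(x, true)` and `(y, true)` are in this situation.
-/

open scoped Classical

section

variable {V I : Type*}

theorem forall_imp_of_card_filter_le_one [Fintype I] {p q : I → Prop} [DecidablePred p]
    (hp : (Finset.univ.filter p).card ≤ 1) (hpq : ∃ i, p i ∧ q i) : ∀ i, p i → q i := by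
  obtain ⟨j, hpj, hqj⟩ := hpq
  intro i hpi
  obtain rfl : i = j :=
    Finset.card_le_one.1 hp i ((Finset.mem_filter_univ i).2 hpi) j
      ((Finset.mem_filter_univ j).2 hpj)
  exact hqj

theorem Satisfies.update_of_notMem {τ : V → Bool} {c : Finset (V × Bool)} {x : V}
    (h : Satisfies τ c) (hx : (x, τ x) ∉ c) (b : Bool) :
    Satisfies (Function.update τ x b) c := by
  obtain ⟨l, hlc, hτl⟩ := h
  have hlx : l.1 ≠ x := by
    rintro rfl
    exact hx (hτl ▸ hlc)
  exact ⟨l, hlc, (Function.update_of_ne hlx b τ).trans hτl⟩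

theorem Satisfies.update_of_mem_imp_mem {τ : V → Bool} {c : Finset (V × Bool)} {x y : V}
    (h : Satisfies τ c) (hxy : x ≠ y) (hc : (x, τ x) ∈ c → (y, τ y) ∈ c) (b : Bool) :
    Satisfies (Function.update τ x b) c := by
  by_cases hx : (x, τ x) ∈ c
  · exact ⟨_, hc hx, Function.update_of_ne hxy.symm b τ⟩
  · exact h.update_of_notMem hx b

variable [Fintype I]

theorem satCount_le_satCount {F : I → Finset (V × Bool)} {σ τ : V → Bool}
    (h : ∀ i, Satisfies σ (F i) → Satisfies τ (F i)) : satCount F σ ≤ satCount F τ :=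
  Finset.card_le_card (Finset.monotone_filter_right _ fun i _ => h i)

theorem exists_forall_satCount_le (F : I → Finset (V × Bool)) :
    ∃ τ, ∀ σ, satCount F σ ≤ satCount F τ := by
  have hbdd : BddAbove (Set.range (satCount F)) :=
    ⟨Fintype.card I, Set.forall_mem_range.2 fun _ => Finset.card_le_univ _⟩
  obtain ⟨τ, hτ⟩ := Nat.sSup_mem (Set.range_nonempty (satCount F)) hbdd
  exact ⟨τ, fun σ => hτ ▸ le_csSup hbdd (Set.mem_range_self σ)⟩

theorem satCount_eq_satMax [Fintype V] {F : I → Finset (V × Bool)} {τ : V → Bool}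
    (h : ∀ σ, satCount F σ ≤ satCount F τ) : satCount F τ = satMax F :=
  le_antisymm (Finset.le_sup (f := satCount F) (Finset.mem_univ τ)) (Finset.sup_le fun σ _ => h σ)

theorem stmt9_general (F : I → Finset (V × Bool)) {x y : V} (hxy : x ≠ y) {a b : Bool}
    (h : ∀ i, (x, a) ∈ F i → (y, b) ∈ F i) :
    ∃ τ : V → Bool, (∀ σ, satCount F σ ≤ satCount F τ) ∧ (τ x = !a ∨ τ y = !b) := by
  obtain ⟨τ, hτ⟩ := exists_forall_satCount_le F
  by_cases hτxy : τ x = !a ∨ τ y = !b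
  · exact ⟨τ, hτ, hτxy⟩
  · obtain ⟨rfl, rfl⟩ : τ x = a ∧ τ y = b := by
      simpa only [not_or, Bool.not_eq_not] using hτxy
    have hflip : satCount F τ ≤ satCount F (Function.update τ x (!τ x)) :=
      satCount_le_satCount fun i hi => hi.update_of_mem_imp_mem hxy (h i) _
    exact ⟨_, fun σ => (hτ σ).trans hflip, .inl (Function.update_self ..)⟩

end

/-- If `x ≠ y` are variables each occurring positively in exactly one clause, and some
clause contains both positive literals `x` and `y`, then some optimal assignment sets
`x` or `y` to false. -/
theorem stmt9 {V I : Type*} [Fintype V] [Fintype I] (F : I → Finset (V × Bool))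
    (hne : ∀ i, (F i).Nonempty)
    (hone : ∀ i v b b', (v, b) ∈ F i → (v, b') ∈ F i → b = b')
    (x y : V) (hxy : x ≠ y)
    (hx : (Finset.univ.filter fun i : I => (x, true) ∈ F i).card = 1)
    (hy : (Finset.univ.filter fun i : I => (y, true) ∈ F i).card = 1)
    (hc : ∃ i : I, (x, true) ∈ F i ∧ (y, true) ∈ F i) :
    ∃ τ : V → Bool, satCount F τ = satMax F ∧ (τ x = false ∨ τ y = false) := by
  obtain ⟨τ, hτ, hτxy⟩ := stmt9_general F hxy (forall_imp_of_card_filter_le_one hx.le hc)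
  exact ⟨τ, satCount_eq_satMax hτ, hτxy⟩
end

section
/- Let F be a CNF formula over a finite variable type V whose index set is a disjoint union I = I₁ ⊔ I₂ such that there is a bijection u : V → I₁ with F(u x) = {(x, true)} for every x ∈ V, and for every i ∈ I₂ the clause F i is nonempty and contains only negative literals. Let τ* be the minimum cardinality of a set S ⊆ V such that S intersects the variable set of F i for every i ∈ I₂ (such a set exists). Then sat(F) = |I| − τ*. -/
/-!
Complementing, we minimise the number of falsified clauses. An assignment falsifies as many unit
clauses as it has false variables, and a negative clause is satisfied exactly when the set of false
variables hits it. So making the variables of a minimum hitting set false falsifies `τ*` clauses.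
Conversely, adding one variable of each falsified negative clause to the false variables of any
assignment gives a hitting set, whose size is at most the total number of falsified clauses.
-/

open scoped Classical

section Falsified

variable {V I : Type*} [Fintype I]

/-- The indices of the clauses of `F` that the assignment `τ` leaves unsatisfied; maximising
`satCount F` means minimising the size of this set. -/
noncomputable def falsified (F : I → Finset (V × Bool)) (τ : V → Bool) : Finset I :=
  {i | ¬ Satisfies τ (F i)}

theorem mem_falsified {F : I → Finset (V × Bool)} {τ : V → Bool} {i : I} :
    i ∈ falsified F τ ↔ ¬ Satisfies τ (F i) :=
  Finset.mem_filter_univ i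

theorem satCount_add_card_falsified (F : I → Finset (V × Bool)) (τ : V → Bool) :
    satCount F τ + (falsified F τ).card = Fintype.card I :=
  Finset.card_filter_add_card_filter_not _

theorem satMax_eq_card_sub_of_isLeast [Fintype V] {F : I → Finset (V × Bool)} {k : ℕ}
    (hk : IsLeast (Set.range fun τ => (falsified F τ).card) k) :
    satMax F = Fintype.card I - k := by
  obtain ⟨⟨τ₀, rfl⟩, hmin⟩ := hk
  refine le_antisymm (Finset.sup_le fun τ _ => ?_) ?_
  · have hle : (falsified F τ₀).card ≤ (falsified F τ).card := hmin ⟨τ, rfl⟩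
    have hsum := satCount_add_card_falsified F τ
    dsimp only
    omega
  · rw [← satCount_add_card_falsified F τ₀, Nat.add_sub_cancel]
    exact Finset.le_sup (f := satCount F) (Finset.mem_univ τ₀)

theorem card_falsified_sum {J : Type*} [Fintype J] (F : I ⊕ J → Finset (V × Bool))
    (τ : V → Bool) :
    (falsified F τ).card =
      (falsified (fun i => F (.inl i)) τ).card + (falsified (fun j => F (.inr j)) τ).card := by
  simp only [falsified, Finset.card_filter, Fintype.sum_sum_type]

end Falsified

section FalseVars

variable {V : Type*} [Fintype V]

/-- The variables to which `τ` assigns false. This identifies assignments with finite sets of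
variables, which is how assignments are compared with hitting sets. -/
def falseVars (τ : V → Bool) : Finset V := {v | τ v = false}

theorem mem_falseVars {τ : V → Bool} {v : V} : v ∈ falseVars τ ↔ τ v = false :=
  Finset.mem_filter_univ v

theorem falseVars_decide_notMem (S : Finset V) : falseVars (fun v => decide (v ∉ S)) = S := by
  ext v
  simp [mem_falseVars]

theorem card_falsified_unit {J : Type*} [Fintype J] {G : J → Finset (V × Bool)} (u : V ≃ J)
    (hu : ∀ x, G (u x) = {(x, true)}) (τ : V → Bool) :
    (falsified G τ).card = (falseVars τ).card :=
  (Finset.card_equiv u fun x => by simp [mem_falsified, mem_falseVars, hu, Satisfies]).symm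

end FalseVars

section Hitting

variable {V J : Type*}

/-- The set `S` of variables meets the variable set of the clause `c`, regardless of the signs of
the literals of `c`. -/
def Hits (S : Finset V) (c : Finset (V × Bool)) : Prop :=
  ∃ v ∈ S, ∃ b, (v, b) ∈ c

theorem hits_of_mem {S : Finset V} {c : Finset (V × Bool)} {l : V × Bool} (hl : l ∈ c)
    (hS : l.1 ∈ S) : Hits S c :=
  ⟨l.1, hS, l.2, hl⟩

theorem Hits.mono {S T : Finset V} {c : Finset (V × Bool)} (hST : S ⊆ T) (h : Hits S c) :
    Hits T c :=
  let ⟨v, hv, hvc⟩ := h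
  ⟨v, hST hv, hvc⟩

theorem satisfies_iff_hits_falseVars [Fintype V] {c : Finset (V × Bool)}
    (hneg : ∀ l ∈ c, l.2 = false) (τ : V → Bool) :
    Satisfies τ c ↔ Hits (falseVars τ) c := by
  constructor
  · rintro ⟨l, hl, hτ⟩
    exact hits_of_mem hl (mem_falseVars.2 (hτ.trans (hneg l hl)))
  · rintro ⟨v, hv, b, hb⟩
    exact ⟨(v, b), hb, (mem_falseVars.1 hv).trans (hneg _ hb).symm⟩

/-- The hitting number `τ*` of the clauses of `G`: the least size of a set of variables that hits
every clause. It takes the junk value `0` when there is no such set. -/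
noncomputable def hittingNum (G : J → Finset (V × Bool)) : ℕ :=
  sInf {n | ∃ S : Finset V, (∀ j, Hits S (G j)) ∧ S.card = n}

theorem hittingNum_le_card {G : J → Finset (V × Bool)} {S : Finset V} (hS : ∀ j, Hits S (G j)) :
    hittingNum G ≤ S.card :=
  Nat.sInf_le ⟨S, hS, rfl⟩

theorem exists_card_eq_hittingNum [Finite V] {G : J → Finset (V × Bool)}
    (hne : ∀ j, (G j).Nonempty) :
    ∃ S : Finset V, (∀ j, Hits S (G j)) ∧ S.card = hittingNum G := by
  have := Fintype.ofFinite V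
  have hits_univ : ∀ j, Hits Finset.univ (G j) := fun j =>
    let ⟨_, hl⟩ := hne j
    hits_of_mem hl (Finset.mem_univ _)
  exact Nat.sInf_mem (s := {n | ∃ S : Finset V, (∀ j, Hits S (G j)) ∧ S.card = n})
    ⟨_, Finset.univ, hits_univ, rfl⟩

variable [Fintype V] [Fintype J] {G : J → Finset (V × Bool)}

theorem falsified_eq_empty_iff_hits_falseVars (hneg : ∀ j, ∀ l ∈ G j, l.2 = false)
    (τ : V → Bool) :
    falsified G τ = ∅ ↔ ∀ j, Hits (falseVars τ) (G j) := by
  simp only [Finset.eq_empty_iff_forall_notMem, mem_falsified, not_not,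
    satisfies_iff_hits_falseVars (hneg _)]

theorem hittingNum_le_card_falseVars_add_card_falsified (hne : ∀ j, (G j).Nonempty)
    (hneg : ∀ j, ∀ l ∈ G j, l.2 = false) (τ : V → Bool) :
    hittingNum G ≤ (falseVars τ).card + (falsified G τ).card := by
  choose l hl using hne
  let picked : Finset V := (falsified G τ).image fun j => (l j).1
  have hits_union : ∀ j, Hits (falseVars τ ∪ picked) (G j) := fun j => by
    by_cases hj : Satisfies τ (G j)
    · exact ((satisfies_iff_hits_falseVars (hneg j) τ).1 hj).mono Finset.subset_union_left
    · have hpicked : (l j).1 ∈ picked := Finset.mem_image_of_mem _ (mem_falsified.2 hj)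
      exact hits_of_mem (hl j) (Finset.mem_union_right _ hpicked)
  calc hittingNum G ≤ (falseVars τ ∪ picked).card := hittingNum_le_card hits_union
    _ ≤ (falseVars τ).card + picked.card := Finset.card_union_le _ _
    _ ≤ (falseVars τ).card + (falsified G τ).card := by gcongr; exact Finset.card_image_le

theorem isLeast_hittingNum (hne : ∀ j, (G j).Nonempty) (hneg : ∀ j, ∀ l ∈ G j, l.2 = false) :
    IsLeast (Set.range fun τ => (falseVars τ).card + (falsified G τ).card) (hittingNum G) := by
  constructor
  · obtain ⟨S, hS, hcard⟩ := exists_card_eq_hittingNum hne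
    have hfalse : falseVars (fun v => decide (v ∉ S)) = S := falseVars_decide_notMem S
    have hsat : falsified G (fun v => decide (v ∉ S)) = ∅ :=
      (falsified_eq_empty_iff_hits_falseVars hneg _).2 (by rwa [hfalse])
    exact ⟨fun v => decide (v ∉ S), by simp only [hfalse, hsat, Finset.card_empty, add_zero, hcard]⟩
  · rintro _ ⟨τ, rfl⟩
    exact hittingNum_le_card_falseVars_add_card_falsified hne hneg τ

end Hitting

/-- For a transformed special formula (unit positive clauses indexed by `I₁` via a
bijection with the variables, and purely negative nonempty clauses indexed by `I₂`),
`sat(F) = |I| − τ*`, where `τ*` is the minimum size of a set of variables hitting the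
variable set of every clause of `I₂`. -/
theorem stmt11 {V I₁ I₂ : Type*} [Fintype V] [Fintype I₁] [Fintype I₂]
    (F : I₁ ⊕ I₂ → Finset (V × Bool))
    (hone : ∀ i v b b', (v, b) ∈ F i → (v, b') ∈ F i → b = b')
    (u : V ≃ I₁) (hu : ∀ x : V, F (Sum.inl (u x)) = {(x, true)})
    (h2 : ∀ j : I₂, (F (Sum.inr j)).Nonempty ∧ ∀ l ∈ F (Sum.inr j), l.2 = false) :
    satMax F = Fintype.card (I₁ ⊕ I₂) -
      sInf {n : ℕ | ∃ S : Finset V,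
        (∀ j : I₂, ∃ v ∈ S, ∃ b, (v, b) ∈ F (Sum.inr j)) ∧ S.card = n} := by
  have hfalsified : ∀ τ, (falsified F τ).card =
      (falseVars τ).card + (falsified (fun j => F (.inr j)) τ).card := fun τ => by
    rw [card_falsified_sum, card_falsified_unit u hu]
  refine satMax_eq_card_sub_of_isLeast ?_
  simp only [hfalsified]
  exact isLeast_hittingNum (fun j => (h2 j).1) fun j => (h2 j).2
end

section
/- Let H be a hypergraph with vertex type U and nonempty edges e : J → Finset U, let m = |J|, and let k be a natural number. Then H has a hitting set S with |S| + k ≤ m if and only if H has a k-mini-hitting set. -/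
open scoped Classical

/-!
Write `E[S]` for the set of edges met by `S`, and `m` for the number of edges.

A mini-hitting set `S` becomes a hitting set of size at most `|S| + (m - |E[S]|) ≤ m - k` by adding
one vertex from each edge that `S` misses.

Conversely, a hitting set `S` with `|S| + k ≤ m` satisfies `|S| + k ≤ |E[S]|`, and so contains an
inclusion-minimal `T` with `|T| + k ≤ |E[T]|`. Let `s` be the slack in this inequality. By
minimality, deleting any `v ∈ T` loses at least `s + 2` edges. Edges lost to different vertices are
different, whence `|T| (s + 2) ≤ |E[T]| = |T| + k + s`. This forces `|T| ≤ k`.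
-/

section Hypergraph

open Finset

variable {U J : Type*}

/-- A hitting set (or transversal) of a hypergraph: a finite set of vertices meeting every edge. The
hypergraph is given by its indexed family of edges `e`, which may be infinite sets. -/
def IsHittingSet (e : J → Set U) (S : Finset U) : Prop :=
  ∀ j, ∃ v ∈ S, v ∈ e j

variable [Fintype J] {e : J → Set U} {S : Finset U} {k : ℕ}

/-- The set `E[S]` of edges of the hypergraph `e` that meet `S`, as a set of indices so that
parallel edges are counted separately. -/
noncomputable def hitEdges (e : J → Set U) (S : Finset U) : Finset J :=
  {j | ∃ v ∈ S, v ∈ e j}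

/-- A `k`-mini-hitting set of the hypergraph `e`: a set of at most `k` vertices that meets at least
`k` more edges than it has vertices. -/
def IsMiniHittingSet (e : J → Set U) (k : ℕ) (S : Finset U) : Prop :=
  #S ≤ k ∧ #S + k ≤ #(hitEdges e S)

theorem mem_hitEdges {j : J} : j ∈ hitEdges e S ↔ ∃ v ∈ S, v ∈ e j := by
  simp [hitEdges]

theorem hitEdges_mono {T : Finset U} (h : S ⊆ T) : hitEdges e S ⊆ hitEdges e T := fun j hj ↦ by
  obtain ⟨v, hvS, hvj⟩ := mem_hitEdges.1 hj
  exact mem_hitEdges.2 ⟨v, h hvS, hvj⟩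

theorem IsHittingSet.hitEdges_eq_univ (hS : IsHittingSet e S) : hitEdges e S = univ :=
  eq_univ_of_forall fun j ↦ mem_hitEdges.2 (hS j)

theorem exists_isHittingSet_card_add_card_hitEdges_le (he : ∀ j, (e j).Nonempty) (S : Finset U) :
    ∃ T, IsHittingSet e T ∧ #T + #(hitEdges e S) ≤ #S + Fintype.card J := by
  choose f hf using he
  refine ⟨S ∪ (hitEdges e S)ᶜ.image f, fun j ↦ ?_, ?_⟩
  · by_cases hj : j ∈ hitEdges e S
    · obtain ⟨v, hvS, hvj⟩ := mem_hitEdges.1 hj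
      exact ⟨v, mem_union_left _ hvS, hvj⟩
    · exact ⟨f j, mem_union_right _ (mem_image_of_mem f (mem_compl.2 hj)), hf j⟩
  · calc #(S ∪ (hitEdges e S)ᶜ.image f) + #(hitEdges e S)
        ≤ #S + #(hitEdges e S)ᶜ + #(hitEdges e S) := by
          gcongr
          exact (card_union_le _ _).trans (Nat.add_le_add_left card_image_le _)
      _ = #S + Fintype.card J := by rw [add_assoc, card_compl_add_card]

theorem eq_of_mem_hitEdges_sdiff_hitEdges_erase {v w : U} {j : J}
    (hj : j ∈ hitEdges e S \ hitEdges e (S.erase v)) (hwS : w ∈ S) (hwj : w ∈ e j) : w = v := by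
  by_contra hwv
  exact (mem_sdiff.1 hj).2 (mem_hitEdges.2 ⟨w, mem_erase.2 ⟨hwv, hwS⟩, hwj⟩)

theorem sum_card_hitEdges_sdiff_hitEdges_erase_le (e : J → Set U) (S : Finset U) :
    ∑ v ∈ S, #(hitEdges e S \ hitEdges e (S.erase v)) ≤ #(hitEdges e S) := by
  have h_disjoint : (S : Set U).PairwiseDisjoint
      fun v ↦ hitEdges e S \ hitEdges e (S.erase v) := by
    refine fun v _ w _ hvw ↦ disjoint_left.2 fun j hjv hjw ↦ hvw ?_
    obtain ⟨x, hxS, hxj⟩ := mem_hitEdges.1 (mem_sdiff.1 hjv).1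
    exact (eq_of_mem_hitEdges_sdiff_hitEdges_erase hjv hxS hxj).symm.trans
      (eq_of_mem_hitEdges_sdiff_hitEdges_erase hjw hxS hxj)
  rw [← card_biUnion h_disjoint]
  exact card_le_card (biUnion_subset.2 fun _ _ ↦ sdiff_subset)

theorem isMiniHittingSet_of_minimal (hS : Minimal (fun T ↦ #T + k ≤ #(hitEdges e T)) S) :
    IsMiniHittingSet e k S := by
  refine ⟨?_, hS.prop⟩
  obtain ⟨s, hs⟩ := Nat.exists_eq_add_of_le hS.prop
  have h_loss : ∀ v ∈ S, s + 2 ≤ #(hitEdges e S \ hitEdges e (S.erase v)) := fun v hv ↦ by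
    have h_erase : #(hitEdges e (S.erase v)) < #(S.erase v) + k :=
      not_le.1 (hS.not_prop_of_lt (erase_ssubset hv))
    have h_card := card_erase_add_one hv
    have h_sdiff := card_sdiff_add_card_eq_card (hitEdges_mono (e := e) (erase_subset v S))
    omega
  have h_count : #S * (s + 2) ≤ #S + k + s :=
    calc #S * (s + 2) ≤ ∑ v ∈ S, #(hitEdges e S \ hitEdges e (S.erase v)) :=
          card_nsmul_le_sum _ _ _ h_loss
      _ ≤ #(hitEdges e S) := sum_card_hitEdges_sdiff_hitEdges_erase_le e S
      _ = #S + k + s := hs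
  have h_lt : #S * (s + 1) < (k + 1) * (s + 1) := by nlinarith
  exact Nat.le_of_lt_succ (lt_of_mul_lt_mul_right h_lt (Nat.zero_le _))

theorem exists_subset_isMiniHittingSet (hS : #S + k ≤ #(hitEdges e S)) :
    ∃ T ⊆ S, IsMiniHittingSet e k T := by
  obtain ⟨T, hTS, hT⟩ :=
    exists_minimal_le_of_wellFoundedLT (fun T ↦ #T + k ≤ #(hitEdges e T)) S hS
  exact ⟨T, hTS, isMiniHittingSet_of_minimal hT⟩

theorem stmt13_general (e : J → Set U) (he : ∀ j, (e j).Nonempty) (k : ℕ) :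
    (∃ S, IsHittingSet e S ∧ #S + k ≤ Fintype.card J) ↔ ∃ S, IsMiniHittingSet e k S := by
  constructor
  · rintro ⟨S, hS, hk⟩
    rw [← card_univ, ← hS.hitEdges_eq_univ] at hk
    obtain ⟨T, -, hT⟩ := exists_subset_isMiniHittingSet hk
    exact ⟨T, hT⟩
  · rintro ⟨S, -, hk⟩
    obtain ⟨T, hT, hTS⟩ := exists_isHittingSet_card_add_card_hitEdges_le he S
    exact ⟨T, hT, by omega⟩

end Hypergraph

/-- A hypergraph has a hitting set of size at most `m - k` if and only if it has a
`k`-mini-hitting set, i.e. a set `S` of vertices with `|S| ≤ k` and `|E[S]| ≥ |S| + k`. -/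
theorem stmt13 {U J : Type*} [Fintype U] [Fintype J]
    (e : J → Finset U) (he : ∀ j, (e j).Nonempty) (k : ℕ) :
    (∃ S : Finset U, (∀ j : J, ∃ v ∈ S, v ∈ e j) ∧ S.card + k ≤ Fintype.card J) ↔
    (∃ S : Finset U, S.card ≤ k ∧
      S.card + k ≤ (Finset.univ.filter fun j : J => ∃ v ∈ S, v ∈ e j).card) := by
  simpa only [IsHittingSet, IsMiniHittingSet, hitEdges, Finset.mem_coe] using
    stmt13_general (fun j ↦ (e j : Set U)) he k
end

section
/- Let H be a hypergraph with vertex type U and nonempty edges e : J → Finset U, and let k be a natural number. Then H has a k-mini-hitting set if and only if there exist a natural number p with p ≤ k, positive integers a₁, …, a_p with a₁ + ⋯ + a_p = p + k, pairwise distinct vertices w₁, …, w_p ∈ U, and pairwise disjoint sets J₁, …, J_p ⊆ J with |J_t| = a_t and w_t ∈ e j for every j ∈ J_t and every t. -/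
open scoped Classical

/-!
Let every edge meeting a mini-hitting set `S` choose one vertex of `S` on it. At most `|S|` vertices
are chosen, and the fibres of the choice function over them are disjoint, nonempty and altogether
contain at least `|S| + k` edges. Keeping one edge in each fibre and discarding as many of the
others as needed leaves exactly `k` more edges than chosen vertices. Conversely, all edges in the
disjoint sets `J_t` meet the set of the vertices `w_t`.
-/

section MiniHittingSet

variable {U J ι : Type*}

theorem exists_subset_image_eq_card_eq {f : J → U} {s : Finset J} {n : ℕ}
    (hfn : (s.image f).card ≤ n) (hns : n ≤ s.card) :
    ∃ t ⊆ s, t.image f = s.image f ∧ t.card = n := by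
  obtain ⟨r, hrs, hinj, hrf⟩ := Finset.exists_subset_injOn_image_eq_of_surjOn s
    (s.image f) (by simpa using Set.surjOn_image f (s : Set J))
  have hrn : r.card ≤ n := by rwa [← Finset.card_image_of_injOn hinj, hrf]
  obtain ⟨t, hrt, hts, ht⟩ := Finset.exists_subsuperset_card_eq hrs hrn hns
  refine ⟨t, hts, (Finset.image_mono f hts).antisymm ?_, ht⟩
  exact hrf ▸ Finset.image_mono f hrt

/-- The set `E[S]` of (indices of) edges that meet `S`, for a hypergraph whose edges `e j` and
vertex set need not be finite. -/
def incidentEdges (e : J → Set U) (S : Set U) : Set J :=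
  {j | ∃ v ∈ S, v ∈ e j}

theorem sum_card_le_encard_incidentEdges {e : J → Set U} {s : Finset ι} {w : ι → U}
    {Js : ι → Finset J} (hdisj : (s : Set ι).PairwiseDisjoint Js)
    (hmem : ∀ i ∈ s, ∀ j ∈ Js i, w i ∈ e j) :
    ((∑ i ∈ s, (Js i).card : ℕ) : ℕ∞) ≤ (incidentEdges e (w '' s)).encard := by
  rw [← Finset.card_biUnion hdisj, ← Set.encard_coe_eq_coe_finsetCard]
  refine Set.encard_le_encard fun j hj => ?_
  obtain ⟨i, hi, hji⟩ := Finset.mem_biUnion.1 hj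
  exact ⟨w i, Set.mem_image_of_mem w hi, hmem i hi j hji⟩

theorem exists_pairwiseDisjoint_of_card_add_le_encard {e : J → Set U} {S : Finset U} {k : ℕ}
    (hS : ((S.card + k : ℕ) : ℕ∞) ≤ (incidentEdges e S).encard) :
    ∃ T ⊆ S, ∃ Js : U → Finset J, (T : Set U).PairwiseDisjoint Js ∧
      (∀ v ∈ T, (Js v).Nonempty) ∧ (∑ v ∈ T, (Js v).card) = T.card + k ∧
      ∀ v ∈ T, ∀ j ∈ Js v, v ∈ e j := by
  choose f hfS hfe using fun j : incidentEdges e S => j.2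
  obtain ⟨F, hF⟩ : ∃ F : Finset (incidentEdges e S), F.card = S.card + k := by
    have huniv : (Set.univ : Set (incidentEdges e S)).encard = (incidentEdges e S).encard :=
      Set.encard_univ _
    obtain ⟨F, -, hF⟩ := Set.exists_subset_encard_eq (hS.trans_eq huniv.symm)
    lift F to Finset (incidentEdges e S) using Set.finite_of_encard_eq_coe hF
    exact ⟨F, by simpa only [Set.encard_coe_eq_coe_finsetCard, Nat.cast_inj] using hF⟩
  have hTS : F.image f ⊆ S := Finset.image_subset_iff.2 fun j _ => hfS j
  obtain ⟨R, -, himage, hR⟩ := exists_subset_image_eq_card_eq (f := f)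
    (Nat.le_add_right _ k) (hF ▸ Nat.add_le_add_right (Finset.card_le_card hTS) k)
  refine ⟨F.image f, hTS, fun v => (R.filter (f · = v)).map (.subtype _), ?_, ?_, ?_, ?_⟩
  · intro u hu v hv huv
    exact (Finset.disjoint_map _).2 (Set.pairwiseDisjoint_filter f _ R hu hv huv)
  · intro v hv
    obtain ⟨j, hjR, hjv⟩ := Finset.mem_image.1 (himage ▸ hv)
    exact Finset.Nonempty.map ⟨j, Finset.mem_filter.2 ⟨hjR, hjv⟩⟩
  · simp only [Finset.card_map]
    rw [← hR, ← himage, ← Finset.card_eq_sum_card_image]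
  · intro v _ j hj
    obtain ⟨i, hi, rfl⟩ := Finset.mem_map.1 hj
    exact (Finset.mem_filter.1 hi).2 ▸ hfe i

theorem stmt14_general (e : J → Set U) (m k : ℕ) :
    (∃ S : Finset U, S.card ≤ m ∧ ((S.card + k : ℕ) : ℕ∞) ≤ (incidentEdges e S).encard) ↔
    (∃ (p : ℕ) (a : Fin p → ℕ) (w : Fin p → U) (Js : Fin p → Finset J),
      p ≤ m ∧ (∀ t, 1 ≤ a t) ∧ (∑ t, a t) = p + k ∧
      Function.Injective w ∧
      (∀ s t : Fin p, s ≠ t → Disjoint (Js s) (Js t)) ∧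
      (∀ t, (Js t).card = a t) ∧
      (∀ t, ∀ j ∈ Js t, w t ∈ e j)) := by
  constructor
  · rintro ⟨S, hSm, hS⟩
    obtain ⟨T, hTS, Js, hdisj, hne, hsum, hmem⟩ := exists_pairwiseDisjoint_of_card_add_le_encard hS
    let w : Fin T.card ≃ T := T.equivFin.symm
    have hw : Function.Injective fun t => (w t : U) := Subtype.val_injective.comp w.injective
    refine ⟨T.card, fun t => (Js (w t)).card, fun t => w t, fun t => Js (w t),
      (Finset.card_le_card hTS).trans hSm, fun t => (hne _ (w t).2).card_pos, ?_, hw,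
      fun s t hst => hdisj (w s).2 (w t).2 (hw.ne hst), fun _ => rfl, fun t => hmem _ (w t).2⟩
    rw [← hsum, w.sum_comp fun v : T => (Js v).card, Finset.sum_coe_sort T fun v => (Js v).card]
  · rintro ⟨p, a, w, Js, hpm, -, hsum, hw, hdisj, hcard, hmem⟩
    have hwp : (Finset.univ.image w).card = p := by
      rw [Finset.card_image_of_injective _ hw, Finset.card_fin]
    refine ⟨Finset.univ.image w, hwp.trans_le hpm, ?_⟩
    rw [hwp, ← hsum, ← Finset.sum_congr rfl fun t _ => hcard t, Finset.coe_image]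
    exact sum_card_le_encard_incidentEdges (fun s _ t _ hst => hdisj s t hst) fun t _ => hmem t

end MiniHittingSet

/-- A hypergraph has a `k`-mini-hitting set if and only if there are `p ≤ k` distinct
vertices `w₁, …, w_p`, positive integers `a₁ + ⋯ + a_p = p + k`, and pairwise disjoint
sets of edge indices `J₁, …, J_p` with `|J_t| = a_t` and `w_t` belonging to every edge
indexed by `J_t`. -/
theorem stmt14 {U J : Type*} [Fintype U] [Fintype J]
    (e : J → Finset U) (he : ∀ j, (e j).Nonempty) (k : ℕ) :
    (∃ S : Finset U, S.card ≤ k ∧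
      S.card + k ≤ (Finset.univ.filter fun j : J => ∃ v ∈ S, v ∈ e j).card) ↔
    (∃ (p : ℕ) (a : Fin p → ℕ) (w : Fin p → U) (Js : Fin p → Finset J),
      p ≤ k ∧ (∀ t, 1 ≤ a t) ∧ (∑ t, a t) = p + k ∧
      Function.Injective w ∧
      (∀ s t : Fin p, s ≠ t → Disjoint (Js s) (Js t)) ∧
      (∀ t, (Js t).card = a t) ∧
      (∀ t, ∀ j ∈ Js t, w t ∈ e j)) := by
  simpa only [incidentEdges, Finset.mem_coe, ← Finset.coe_filter_univ,
    Set.encard_coe_eq_coe_finsetCard, Nat.cast_le] using stmt14_general (fun j => (e j : Set U)) k k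
end

section
/- Let p(s) denote the number of partitions of the natural number s. Then p(s) ∼ e^{π√(2s/3)}/(4s√3) as s → ∞; that is, the ratio p(s) · (4s√3) / e^{π√(2s/3)} tends to 1 as s tends to infinity. -/
open scoped Classical

/-!
The argument is the circle method with a single circle through the saddle point.

Let `P(q) = ∏ (1 - q ^ k)` be Euler's product. In the unit disc `1 / P` is the generating function
of the partition numbers: the product of the first `N` geometric series `1 / (1 - q ^ k)` counts
partitions into parts at most `N`, and dominated convergence lets `N → ∞`. Cauchy's formula on the
circle `|q| = e^{-t}` then reads
`2π p(n) = ∫_{-π}^{π} P(e^{-(t - iθ)})⁻¹ e^{n (t - iθ)} dθ`.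

The transformation of Dedekind's eta function under `τ ↦ -1/τ` gives
`1 / P(e^{-w}) = √(w / 2π) e^{-w/24} e^{π² / (6w)} / P(e^{-4π² / w})`.
Hence the integrand behaves like `√(w / 2π) e^{π² / (6w) + n w}` with `w = t - iθ`, whose saddle
point is `t = π / √(6n)`. Put `t = s²` and `θ = u s³`. Divided by its size at the saddle point, the
integrand converges pointwise to `exp (-(π² / 6) u²)` as `s → 0⁺`.

The passage to the limit under the integral needs a majorant on the whole circle, minor arcs
included. Comparing the logarithmic series of the factors gives
`|P(z)| ≥ P(|z|) exp (1 / (1 - |z|) - Re 1 / (1 - z))` for `|z| < 1`, and the exponent is large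
enough to dominate the rescaled integrand by a multiple of `1 / (1 + u²)`. The integral therefore
tends to the Gaussian integral `√(6 / π)`.
-/

open Complex Filter Topology MeasureTheory Finset
open scoped Real

namespace HardyRamanujan

/-! ### The generating function of the partition numbers -/

section GeneratingFunction

variable {𝕜 : Type*} [RCLike 𝕜]

lemma hasSum_coeff_mul_mul_pow {f g : PowerSeries 𝕜} {q a b : 𝕜}
    (hf : HasSum (fun n ↦ f.coeff n * q ^ n) a) (hg : HasSum (fun n ↦ g.coeff n * q ^ n) b) :
    HasSum (fun n ↦ (f * g).coeff n * q ^ n) (a * b) := by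
  have hcoeff : (fun n ↦ (f * g).coeff n * q ^ n) = fun n ↦
      ∑ kl ∈ antidiagonal n, f.coeff kl.1 * q ^ kl.1 * (g.coeff kl.2 * q ^ kl.2) := by
    ext n
    rw [PowerSeries.coeff_mul, sum_mul]
    refine sum_congr rfl fun kl hkl ↦ ?_
    rw [← mem_antidiagonal.mp hkl, pow_add]
    ring
  have hf' := hf.summable.norm
  have hg' := hg.summable.norm
  rw [hcoeff, ← hf.tsum_eq, ← hg.tsum_eq,
    tsum_mul_tsum_eq_tsum_sum_antidiagonal_of_summable_norm hf' hg']
  exact (summable_norm_sum_mul_antidiagonal_of_summable_norm hf' hg').of_norm.hasSum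

lemma hasSum_coeff_prod_mul_pow {ι : Type*} {f : ι → PowerSeries 𝕜} {q : 𝕜} {a : ι → 𝕜}
    (s : Finset ι) (h : ∀ i ∈ s, HasSum (fun n ↦ (f i).coeff n * q ^ n) (a i)) :
    HasSum (fun n ↦ (∏ i ∈ s, f i).coeff n * q ^ n) (∏ i ∈ s, a i) := by
  induction s using Finset.cons_induction with
  | empty =>
    simpa using hasSum_single (f := fun n ↦ (PowerSeries.coeff n (1 : PowerSeries 𝕜)) * q ^ n) 0
      fun n hn ↦ by simp [PowerSeries.coeff_one, hn]
  | cons i s hi ih =>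
    rw [prod_cons, prod_cons]
    exact hasSum_coeff_mul_mul_pow (h i (mem_cons_self i s))
      (ih fun j hj ↦ h j (mem_cons_of_mem hj))

open PowerSeries.WithPiTopology in
lemma coeff_tsum_X_pow_mul {k : ℕ} (hk : k ≠ 0) (n : ℕ) :
    (∑' j : ℕ, (PowerSeries.X : PowerSeries 𝕜) ^ (k * j)).coeff n = if k ∣ n then 1 else 0 := by
  have hsum : Summable fun j : ℕ ↦ (PowerSeries.X : PowerSeries 𝕜) ^ (k * j) := by
    simp_rw [pow_mul]
    exact summable_pow_of_constantCoeff_eq_zero (by simp [hk])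
  rw [hsum.map_tsum (PowerSeries.coeff n) (continuous_coeff 𝕜 n)]
  simp_rw [PowerSeries.coeff_X_pow]
  split_ifs with h
  · obtain ⟨j, rfl⟩ := h
    simp [hk]
  · refine (tsum_congr fun j ↦ if_neg ?_).trans tsum_zero
    rintro rfl
    exact h (dvd_mul_right k j)

open PowerSeries.WithPiTopology in
lemma hasSum_coeff_tsum_X_pow_mul {q : 𝕜} (hq : ‖q‖ < 1) {k : ℕ} (hk : k ≠ 0) :
    HasSum (fun n ↦ (∑' j : ℕ, (PowerSeries.X : PowerSeries 𝕜) ^ (k * j)).coeff n * q ^ n)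
      (1 - q ^ k)⁻¹ := by
  have hinj : Function.Injective (k * ·) := mul_right_injective₀ hk
  have hqk : ‖q ^ k‖ < 1 := by simpa using pow_lt_one₀ (norm_nonneg q) hq hk
  simp_rw [coeff_tsum_X_pow_mul hk]
  rw [← hinj.hasSum_iff fun n hn ↦ ?_]
  · refine (hasSum_geometric_of_norm_lt_one hqk).congr_fun fun j ↦ ?_
    simp [pow_mul]
  · rw [if_neg fun ⟨j, hj⟩ ↦ hn ⟨j, hj.symm⟩, zero_mul]

open PowerSeries.WithPiTopology in
lemma mk_card_restricted_le_eq_prod (N : ℕ) :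
    PowerSeries.mk (fun n ↦ (#(Nat.Partition.restricted n (· ≤ N)) : 𝕜)) =
      ∏ i ∈ range N, ∑' j : ℕ, PowerSeries.X ^ ((i + 1) * j) := by
  have h := Nat.Partition.hasProd_powerSeriesMk_card_restricted 𝕜 (· ≤ N)
  refine (h.unique (hasProd_prod_of_ne_finset_one fun i hi ↦ ?_)).trans
    (prod_congr rfl fun i hi ↦ ?_)
  · exact if_neg (by simpa [Nat.succ_le_iff] using hi)
  · exact if_pos (Nat.succ_le_of_lt (mem_range.mp hi))

lemma hasSum_card_restricted_le {q : 𝕜} (hq : ‖q‖ < 1) (N : ℕ) :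
    HasSum (fun n ↦ (#(Nat.Partition.restricted n (· ≤ N)) : 𝕜) * q ^ n)
      (∏ i ∈ range N, (1 - q ^ (i + 1)))⁻¹ := by
  have h := hasSum_coeff_prod_mul_pow (range N)
    fun i _ ↦ hasSum_coeff_tsum_X_pow_mul hq i.succ_ne_zero
  simpa [← mk_card_restricted_le_eq_prod, prod_inv_distrib] using h

lemma restricted_le_eq_univ {n N : ℕ} (h : n ≤ N) :
    Nat.Partition.restricted n (· ≤ N) = univ :=
  filter_true_of_mem fun P _ _ hi ↦ (P.le_of_mem_parts hi).trans h

end GeneratingFunction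

/-- Euler's product `∏_{n ≥ 1} (1 - q ^ n)`, whose inverse is the generating function of the
partition numbers. As a `tprod` it is meaningful for `‖q‖ < 1`. -/
noncomputable def eulerProd (q : ℂ) : ℂ := ∏' n : ℕ, (1 - q ^ (n + 1))

section EulerProd

variable {q : ℂ}

lemma tendsto_prod_eulerProd (hq : ‖q‖ < 1) :
    Tendsto (fun N ↦ ∏ i ∈ range N, (1 - q ^ (i + 1))) atTop (𝓝 (eulerProd q)) :=
  (ModularForm.multipliable_one_sub_pow hq).hasProd.tendsto_prod_nat

lemma norm_pow_succ_lt_one (hq : ‖q‖ < 1) (i : ℕ) : ‖q ^ (i + 1)‖ < 1 := by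
  simpa using pow_lt_one₀ (norm_nonneg q) hq i.succ_ne_zero

lemma eulerProd_ne_zero (hq : ‖q‖ < 1) : eulerProd q ≠ 0 := by
  simp_rw [eulerProd, sub_eq_add_neg]
  refine tprod_one_add_ne_zero_of_summable (fun i h ↦ ?_) ?_
  · have hi := norm_pow_succ_lt_one hq i
    rw [← sub_eq_zero.mp ((sub_eq_add_neg _ _).trans h), norm_one] at hi
    exact hi.false
  · simpa using (summable_nat_add_iff 1).mpr (summable_geometric_of_lt_one (norm_nonneg q) hq)

lemma summable_card_partition_mul_pow {r : ℝ} (hr0 : 0 ≤ r) (hr1 : r < 1) :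
    Summable fun n ↦ (Fintype.card (Nat.Partition n) : ℝ) * r ^ n := by
  have hr : ‖(r : ℂ)‖ < 1 := by simpa [abs_of_nonneg hr0]
  obtain ⟨C, hC⟩ := ((tendsto_prod_eulerProd hr).inv₀ (eulerProd_ne_zero hr)).norm.bddAbove_range
  refine summable_of_sum_range_le (c := C) (fun n ↦ by positivity) fun N ↦ ?_
  have hN := hasSum_card_restricted_le (q := r) (by simpa [abs_of_nonneg hr0] using hr1) N
  calc ∑ n ∈ range N, (Fintype.card (Nat.Partition n) : ℝ) * r ^ n
      = ∑ n ∈ range N, (#(Nat.Partition.restricted n (· ≤ N)) : ℝ) * r ^ n :=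
        sum_congr rfl fun n hn ↦ by rw [restricted_le_eq_univ (mem_range.mp hn).le, card_univ]
    _ ≤ (∏ i ∈ range N, (1 - r ^ (i + 1)))⁻¹ :=
        sum_le_hasSum _ (fun n _ ↦ by positivity) hN
    _ ≤ ‖(∏ i ∈ range N, (1 - (r : ℂ) ^ (i + 1)))⁻¹‖ := by
        exact_mod_cast (le_abs_self _).trans_eq (Complex.norm_real _).symm
    _ ≤ C := hC ⟨N, rfl⟩

theorem hasSum_card_partition_mul_pow (hq : ‖q‖ < 1) :
    HasSum (fun n ↦ (Fintype.card (Nat.Partition n) : ℂ) * q ^ n) (eulerProd q)⁻¹ := by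
  have hbound := summable_card_partition_mul_pow (norm_nonneg q) hq
  have hdom : Tendsto (fun N ↦ ∑' n, (#(Nat.Partition.restricted n (· ≤ N)) : ℂ) * q ^ n) atTop
      (𝓝 (∑' n, (Fintype.card (Nat.Partition n) : ℂ) * q ^ n)) := by
    refine tendsto_tsum_of_dominated_convergence hbound (fun n ↦ ?_)
      (Eventually.of_forall fun N n ↦ ?_)
    · refine tendsto_const_nhds.congr' ?_
      filter_upwards [eventually_ge_atTop n] with N hN
      rw [restricted_le_eq_univ hN, card_univ]
    · rw [norm_mul, norm_pow, Complex.norm_natCast]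
      gcongr
      exact card_le_univ _
  simp_rw [fun N ↦ (hasSum_card_restricted_le hq N).tsum_eq] at hdom
  have hsum : Summable fun n ↦ (Fintype.card (Nat.Partition n) : ℂ) * q ^ n :=
    .of_norm (by simpa using hbound)
  rw [tendsto_nhds_unique ((tendsto_prod_eulerProd hq).inv₀ (eulerProd_ne_zero hq)) hdom]
  exact hsum.hasSum

lemma continuousOn_eulerProd : ContinuousOn eulerProd (Metric.ball 0 1) :=
  ModularForm.differentiableOn_tprod_one_sub_pow.continuousOn

lemma tendsto_eulerProd_zero : Tendsto eulerProd (𝓝 0) (𝓝 1) := by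
  have h := continuousOn_eulerProd.continuousAt (Metric.ball_mem_nhds 0 one_pos)
  simpa [ContinuousAt, eulerProd] using h

end EulerProd

/-! ### Cauchy's formula -/

lemma norm_exp_neg_sub_mul_I (t θ : ℝ) : ‖cexp (-(t - θ * I))‖ = Real.exp (-t) := by
  simp [Complex.norm_exp]

lemma integral_exp_int_mul_I_mul (k : ℤ) :
    ∫ θ in (-π)..π, cexp (k * I * θ) = if k = 0 then (2 * π : ℂ) else 0 := by
  split_ifs with hk
  · subst hk
    simp only [Int.cast_zero, zero_mul, Complex.exp_zero, intervalIntegral.integral_const,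
      real_smul]
    push_cast
    ring
  · have hperiod : cexp (k * I * (π : ℝ)) = cexp (k * I * ((-π : ℝ) : ℂ)) :=
      Complex.exp_eq_exp_iff_exists_int.mpr ⟨k, by push_cast; ring⟩
    rw [integral_exp_mul_complex (by simp [hk]), hperiod, sub_self, zero_div]

lemma integral_const_mul_pow_mul_exp (c : ℂ) (t : ℝ) (m n : ℕ) :
    ∫ θ in (-π)..π, c * cexp (-(t - θ * I)) ^ m * cexp (n * (t - θ * I)) =
      if m = n then 2 * π * c else 0 := by
  have hexp (θ : ℝ) : c * cexp (-(t - θ * I)) ^ m * cexp (n * (t - θ * I)) =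
      c * cexp ((n - m) * t) * cexp (((m - n : ℤ) : ℂ) * I * θ) := by
    rw [← Complex.exp_nat_mul, mul_assoc, mul_assoc, ← Complex.exp_add, ← Complex.exp_add]
    congr 2
    push_cast
    ring
  simp_rw [hexp, intervalIntegral.integral_const_mul, integral_exp_int_mul_I_mul, sub_eq_zero,
    Nat.cast_inj]
  split_ifs with h
  · simp [h, mul_comm]
  · exact mul_zero _

theorem integral_mul_exp_eq_coeff {a : ℕ → ℂ} {f : ℂ → ℂ} {t : ℝ}
    (hf : ∀ q : ℂ, ‖q‖ = Real.exp (-t) → HasSum (fun m ↦ a m * q ^ m) (f q)) (n : ℕ) :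
    ∫ θ in (-π)..π, f (cexp (-(t - θ * I))) * cexp (n * (t - θ * I)) = 2 * π * a n := by
  have ha : Summable fun m ↦ ‖a m‖ * Real.exp (-t) ^ m := by
    simpa [Complex.norm_exp] using
      (hf (Real.exp (-t) : ℂ) (by simp [Complex.norm_exp])).summable.norm
  have hsum := intervalIntegral.hasSum_integral_of_dominated_convergence
    (μ := volume) (a := -π) (b := π)
    (F := fun m (θ : ℝ) ↦ a m * cexp (-(t - θ * I)) ^ m * cexp (n * (t - θ * I)))
    (f := fun θ : ℝ ↦ f (cexp (-(t - θ * I))) * cexp (n * (t - θ * I)))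
    (fun m _ ↦ ‖a m‖ * Real.exp (-t) ^ m * Real.exp (n * t))
    (fun m ↦ Continuous.aestronglyMeasurable (by fun_prop))
    (fun m ↦ Eventually.of_forall fun θ _ ↦ by simp [Complex.norm_exp])
    (Eventually.of_forall fun θ _ ↦ ha.mul_right _)
    intervalIntegrable_const
    (Eventually.of_forall fun θ _ ↦ (hf _ (norm_exp_neg_sub_mul_I t θ)).mul_right _)
  simp_rw [integral_const_mul_pow_mul_exp] at hsum
  exact (hsum.unique (hasSum_single n fun m hm ↦ if_neg hm)).trans (if_pos rfl)

lemma integral_inv_eulerProd_mul_exp {t : ℝ} (ht : 0 < t) (n : ℕ) :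
    ∫ θ in (-π)..π, (eulerProd (cexp (-(t - θ * I))))⁻¹ * cexp (n * (t - θ * I)) =
      2 * π * (Fintype.card (Nat.Partition n) : ℂ) :=
  integral_mul_exp_eq_coeff (f := fun q ↦ (eulerProd q)⁻¹)
    (fun q hq ↦ hasSum_card_partition_mul_pow (by simpa [hq] using ht)) n

/-! ### The modular relation -/

lemma sqrt_mul {x y : ℂ} (hx : x ≠ 0) (hy : y ≠ 0) (h : arg x + arg y ∈ Set.Ioc (-π) π) :
    sqrt (x * y) = sqrt x * sqrt y := by
  simp_rw [Complex.sqrt, cpow_def_of_ne_zero hx, cpow_def_of_ne_zero hy,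
    cpow_def_of_ne_zero (mul_ne_zero hx hy), Complex.log_mul hx hy h, add_mul, Complex.exp_add]

lemma sqrt_ofReal_mul {a : ℝ} (ha : 0 < a) {z : ℂ} (hz : z ≠ 0) :
    sqrt (a * z) = √a * sqrt z := by
  have harg : arg a + arg z ∈ Set.Ioc (-π) π := by
    rw [arg_ofReal_of_nonneg ha.le, zero_add]
    exact arg_mem_Ioc z
  rw [sqrt_mul (ofReal_ne_zero.mpr ha.ne') hz harg, Real.sqrt_eq_rpow,
    Complex.ofReal_cpow ha.le, Complex.sqrt]
  norm_num

lemma sqrt_I_mul {w : ℂ} (hw : 0 < w.re) : sqrt (I * w) = sqrt I * sqrt w := by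
  have harg := abs_lt.mp (abs_arg_lt_pi_div_two_iff.mpr (Or.inl hw))
  refine sqrt_mul I_ne_zero (ne_of_apply_ne re hw.ne') ?_
  rw [arg_I]
  constructor <;> linarith [Real.pi_pos]

lemma re_ofReal_div_pos {a : ℝ} (ha : 0 < a) {w : ℂ} (hw : 0 < w.re) : 0 < (a / w).re := by
  have hw0 : w ≠ 0 := ne_of_apply_ne re hw.ne'
  rw [div_eq_mul_inv, re_ofReal_mul, inv_re]
  exact mul_pos ha (div_pos hw (normSq_pos.mpr hw0))

lemma norm_exp_neg_lt_one {w : ℂ} (hw : 0 < w.re) : ‖cexp (-w)‖ < 1 := by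
  simpa [Complex.norm_exp] using hw

/-- At `τ = I * w / (2 * π)` the nome `exp (2 * π * I * τ)` equals `exp (-w)`. -/
lemma eta_I_mul_div_two_pi (w : ℂ) :
    ModularForm.eta (I * w / (2 * π)) = cexp (-w / 24) * eulerProd (cexp (-w)) := by
  have hpi : (π : ℂ) ≠ 0 := ofReal_ne_zero.mpr Real.pi_ne_zero
  have hnome : Function.Periodic.qParam 24 (I * w / (2 * π)) = cexp (-w / 24) := by
    rw [Function.Periodic.qParam]
    congr 1
    push_cast
    field_simp
    linear_combination w * I_sq
  have hfactor (n : ℕ) : ModularForm.eta_q n (I * w / (2 * π)) = cexp (-w) ^ (n + 1) := by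
    rw [ModularForm.eta_q_eq_pow]
    congr 2
    field_simp
    linear_combination w * I_sq
  simp_rw [ModularForm.eta, hnome, hfactor, eulerProd]

lemma eta_inversion {w : ℂ} (hw : 0 < w.re) :
    ModularForm.eta (I * (4 * π ^ 2 / w) / (2 * π)) =
      sqrt (w / (2 * π)) * ModularForm.eta (I * w / (2 * π)) := by
  have hw0 : w ≠ 0 := ne_of_apply_ne re hw.ne'
  have hpi : (π : ℂ) ≠ 0 := ofReal_ne_zero.mpr Real.pi_ne_zero
  have hre : 0 < (w / (2 * π)).re := by
    rw [show (2 * π : ℂ) = ((2 * π : ℝ) : ℂ) by push_cast; rfl, div_ofReal_re]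
    positivity
  have hτ : -1 / (I * (w / (2 * π))) = I * (4 * π ^ 2 / w) / (2 * π) := by
    field_simp
    linear_combination -4 * I_sq
  have hmem : I * (w / (2 * π)) ∈ UpperHalfPlane.upperHalfPlaneSet := by
    simpa [UpperHalfPlane.upperHalfPlaneSet] using hre
  have h := ModularForm.eta_comp_eq_csqrt_I_inv hmem
  simp only [Function.comp_apply, Pi.smul_apply, Pi.mul_apply, smul_eq_mul] at h
  have hI : sqrt I ≠ 0 := by simp [Complex.sqrt]
  rw [hτ, sqrt_I_mul hre, mul_assoc, inv_mul_cancel_left₀ hI] at h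
  rw [h, mul_div_assoc]

theorem inv_eulerProd_exp_neg {w : ℂ} (hw : 0 < w.re) :
    (eulerProd (cexp (-w)))⁻¹ = sqrt (w / (2 * π)) * cexp (-w / 24) * cexp (π ^ 2 / (6 * w)) *
      (eulerProd (cexp (-(4 * π ^ 2 / w))))⁻¹ := by
  have hw0 : w ≠ 0 := ne_of_apply_ne re hw.ne'
  have hre : 0 < (4 * π ^ 2 / w).re := by
    exact_mod_cast re_ofReal_div_pos (by positivity : 0 < 4 * π ^ 2) hw
  have hP := eulerProd_ne_zero (norm_exp_neg_lt_one hw)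
  have hP' := eulerProd_ne_zero (norm_exp_neg_lt_one hre)
  have hexp : cexp (-(4 * π ^ 2 / w) / 24) * cexp (π ^ 2 / (6 * w)) = 1 := by
    rw [← Complex.exp_add, ← Complex.exp_zero]
    congr 1
    field_simp
    ring
  have h := eta_inversion hw
  rw [eta_I_mul_div_two_pi, eta_I_mul_div_two_pi] at h
  rw [eq_mul_inv_iff_mul_eq₀ hP', inv_mul_eq_iff_eq_mul₀ hP]
  linear_combination cexp (π ^ 2 / (6 * w)) * h - eulerProd (cexp (-(4 * π ^ 2 / w))) * hexp

/-! ### The rescaled integrand at the saddle point -/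

/-- The point `t - iθ` of the line of integration with `t = s²` and `θ = u s³`. For
`n = π² / (6 s⁴)` the exponent `π² / (6 w) + n w` has its saddle point at `w = s²`, where its second
derivative is of order `s⁻⁶`, so `u` is the coordinate on the scale of the fluctuations. -/
noncomputable def saddlePath (s u : ℝ) : ℂ := s ^ 2 * (1 - u * s * I)

/-- The integrand `P(e^{-w})⁻¹ e^{n w}` of Cauchy's formula for `n = π² / (6 s⁴)`, at the point
`w = saddlePath s u` and divided by its asymptotic size `s / √(2π) · e^{π² / (3 s²)}` at the saddle
point. -/
noncomputable def scaledIntegrand (s u : ℝ) : ℂ :=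
  (√(2 * π) / s : ℝ) * Real.exp (-(π ^ 2 / (3 * s ^ 2))) *
    ((eulerProd (cexp (-saddlePath s u)))⁻¹ * cexp (π ^ 2 / (6 * s ^ 4) * saddlePath s u))

lemma saddlePath_eq_sub_mul_I (s u : ℝ) :
    saddlePath s u = (s ^ 2 : ℝ) - (u * s ^ 3 : ℝ) * I := by
  push_cast [saddlePath]
  ring

@[simp]
lemma saddlePath_re (s u : ℝ) : (saddlePath s u).re = s ^ 2 := by
  simp [saddlePath_eq_sub_mul_I, -ofReal_pow, -ofReal_mul]

@[simp]
lemma saddlePath_im (s u : ℝ) : (saddlePath s u).im = -(u * s ^ 3) := by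
  simp [saddlePath_eq_sub_mul_I, -ofReal_pow, -ofReal_mul]

lemma normSq_saddlePath (s u : ℝ) : normSq (saddlePath s u) = s ^ 4 * (1 + u ^ 2 * s ^ 2) := by
  rw [normSq_apply, saddlePath_re, saddlePath_im]
  ring

lemma one_sub_mul_mul_I_ne_zero (u s : ℝ) : (1 - u * s * I : ℂ) ≠ 0 :=
  ne_of_apply_ne re (by simp)

lemma sqrt_saddlePath_div_two_pi {s : ℝ} (hs : 0 < s) (u : ℝ) :
    sqrt (saddlePath s u / (2 * π)) = (s / √(2 * π) : ℝ) * sqrt (1 - u * s * I) := by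
  have hfactor : saddlePath s u / (2 * π) = (s ^ 2 / (2 * π) : ℝ) * (1 - u * s * I) := by
    push_cast [saddlePath]
    ring
  rw [hfactor, sqrt_ofReal_mul (by positivity) (one_sub_mul_mul_I_ne_zero u s),
    Real.sqrt_div (by positivity), Real.sqrt_sq hs.le]

lemma saddle_exponent_eq {s : ℝ} (hs : s ≠ 0) (u : ℝ) :
    (π ^ 2 / (6 * saddlePath s u) + π ^ 2 / (6 * s ^ 4) * saddlePath s u +
      -(π ^ 2 / (3 * s ^ 2)) : ℂ) = -(π ^ 2 / 6) * u ^ 2 / (1 - u * s * I) := by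
  have hs' : (s : ℂ) ≠ 0 := ofReal_ne_zero.mpr hs
  have hz := one_sub_mul_mul_I_ne_zero u s
  have hus : (u : ℂ) ^ 2 * s ^ 2 = -(1 - (1 - u * s * I)) ^ 2 := by
    linear_combination (u : ℂ) ^ 2 * s ^ 2 * I_sq
  -- in terms of `z = 1 - i u s` the claim is `1 / z + z - 2 = (1 - z)² / z`
  rw [saddlePath]
  generalize (1 - u * s * I : ℂ) = z at hz hus
  field_simp
  linear_combination 3 * hus

lemma scaledIntegrand_eq {s : ℝ} (hs : 0 < s) (u : ℝ) :
    scaledIntegrand s u = sqrt (1 - u * s * I) * cexp (-saddlePath s u / 24) *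
      cexp (-(π ^ 2 / 6) * u ^ 2 / (1 - u * s * I)) *
      (eulerProd (cexp (-(4 * π ^ 2 / saddlePath s u))))⁻¹ := by
  have hscale : ((√(2 * π) / s : ℝ) : ℂ) * (s / √(2 * π) : ℝ) = 1 := by
    rw [← ofReal_mul, div_mul_div_cancel₀ hs.ne', div_self (by positivity), ofReal_one]
  have hre : 0 < (saddlePath s u).re := by
    rw [saddlePath_re]
    positivity
  rw [scaledIntegrand, inv_eulerProd_exp_neg hre, sqrt_saddlePath_div_two_pi hs,
    ← saddle_exponent_eq hs.ne', Complex.exp_add, Complex.exp_add]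
  push_cast at hscale ⊢
  linear_combination (sqrt (1 - u * s * I) * cexp (-saddlePath s u / 24) *
    cexp (π ^ 2 / (6 * saddlePath s u)) * cexp (π ^ 2 / (6 * s ^ 4) * saddlePath s u) *
    cexp (-(π ^ 2 / (3 * s ^ 2))) * (eulerProd (cexp (-(4 * π ^ 2 / saddlePath s u))))⁻¹) * hscale

lemma tendsto_nhdsGT_zero_of_continuous {E : Type*} [TopologicalSpace E] {f : ℝ → E}
    (hf : Continuous f) {b : E} (hb : f 0 = b) : Tendsto f (𝓝[>] 0) (𝓝 b) :=
  hb ▸ (hf.tendsto 0).mono_left nhdsWithin_le_nhds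

lemma tendsto_exp_neg_div_saddlePath (u : ℝ) :
    Tendsto (fun s ↦ cexp (-(4 * π ^ 2 / saddlePath s u))) (𝓝[>] 0) (𝓝 0) := by
  rw [tendsto_exp_nhds_zero_iff]
  simp_rw [neg_re]
  rw [tendsto_neg_atBot_iff]
  have hre (s : ℝ) (hs : 0 < s) :
      (4 * π ^ 2 / saddlePath s u).re = s⁻¹ ^ 2 * (4 * π ^ 2 / (1 + u ^ 2 * s ^ 2)) := by
    rw [show (4 * π ^ 2 : ℂ) = (4 * π ^ 2 : ℝ) by push_cast; rfl, div_eq_mul_inv, re_ofReal_mul,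
      inv_re, saddlePath_re, normSq_saddlePath]
    field_simp
  have hlim : Tendsto (fun s : ℝ ↦ 4 * π ^ 2 / (1 + u ^ 2 * s ^ 2)) (𝓝[>] 0) (𝓝 (4 * π ^ 2)) :=
    tendsto_nhdsGT_zero_of_continuous (by fun_prop (disch := intro; positivity)) (by simp)
  have hpow : Tendsto (fun s : ℝ ↦ s⁻¹ ^ 2) (𝓝[>] 0) atTop :=
    (tendsto_pow_atTop two_ne_zero).comp tendsto_inv_nhdsGT_zero
  refine (hpow.atTop_mul_pos (by positivity) hlim).congr' ?_
  filter_upwards [self_mem_nhdsWithin] with s hs using (hre s hs).symm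

theorem tendsto_scaledIntegrand (u : ℝ) :
    Tendsto (fun s ↦ scaledIntegrand s u) (𝓝[>] 0)
      (𝓝 (Real.exp (-(π ^ 2 / 6) * u ^ 2))) := by
  have hsqrt : Tendsto (fun s : ℝ ↦ sqrt (1 - u * s * I)) (𝓝[>] 0) (𝓝 1) := by
    have hcont : ContinuousAt sqrt 1 := (differentiableAt_sqrt one_mem_slitPlane).continuousAt
    have hbase : Tendsto (fun s : ℝ ↦ 1 - u * s * I) (𝓝[>] 0) (𝓝 1) :=
      tendsto_nhdsGT_zero_of_continuous (by fun_prop) (by simp)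
    simpa [Function.comp_def, Complex.sqrt] using hcont.tendsto.comp hbase
  have hshift : Tendsto (fun s ↦ cexp (-saddlePath s u / 24)) (𝓝[>] 0) (𝓝 1) :=
    tendsto_nhdsGT_zero_of_continuous (by unfold saddlePath; fun_prop) (by simp [saddlePath])
  have hgauss : Tendsto (fun s : ℝ ↦ cexp (-(π ^ 2 / 6) * u ^ 2 / (1 - u * s * I))) (𝓝[>] 0)
      (𝓝 (Real.exp (-(π ^ 2 / 6) * u ^ 2))) :=
    tendsto_nhdsGT_zero_of_continuous
      (by fun_prop (disch := exact one_sub_mul_mul_I_ne_zero u)) (by simp)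
  have heuler := (tendsto_eulerProd_zero.comp (tendsto_exp_neg_div_saddlePath u)).inv₀ one_ne_zero
  have hlim := ((hsqrt.mul hshift).mul hgauss).mul heuler
  rw [one_mul, one_mul, inv_one, mul_one] at hlim
  refine hlim.congr' ?_
  filter_upwards [self_mem_nhdsWithin] with s hs using (scaledIntegrand_eq hs u).symm

/-! ### A majorant on the whole circle -/

lemma norm_one_sub_norm {z : ℂ} (hz : ‖z‖ < 1) : ‖(1 - ‖z‖ : ℂ)‖ = 1 - ‖z‖ := by
  rw [← ofReal_one, ← ofReal_sub, Complex.norm_real, Real.norm_of_nonneg (sub_pos.mpr hz).le]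

/-- In `-log (1 - ‖z‖) + Re log (1 - z) = ∑ (‖z‖ ^ k - Re z ^ k) / k` every term is nonnegative, so
the left side is at least its first term. -/
lemma norm_one_sub_norm_mul_exp_le {z : ℂ} (hz : ‖z‖ < 1) :
    ‖(1 - ‖z‖ : ℂ)‖ * Real.exp (‖z‖ - z.re) ≤ ‖1 - z‖ := by
  have hne : 1 - z ≠ 0 := sub_ne_zero.mpr (ne_of_apply_ne norm (by simpa using hz.ne'))
  have hpos : 0 < 1 - ‖z‖ := sub_pos.mpr hz
  have hseries := (Real.hasSum_pow_div_log_of_abs_lt_one (x := ‖z‖) (by rwa [abs_norm])).sub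
    (Complex.hasSum_re (Complex.hasSum_taylorSeries_neg_log' hz))
  have hterm (n : ℕ) :
      0 ≤ ‖z‖ ^ (n + 1) / ((n : ℝ) + 1) - (z ^ (n + 1) / ((n : ℂ) + 1)).re := by
    have hnorm : ‖(n : ℂ) + 1‖ = n + 1 := by exact_mod_cast Complex.norm_natCast (n + 1)
    simpa [norm_div, hnorm] using re_le_norm (z ^ (n + 1) / ((n : ℂ) + 1))
  have hfirst := le_hasSum hseries 0 fun n _ ↦ hterm n
  simp only [zero_add, pow_one, Nat.cast_zero, div_one, neg_re, log_re] at hfirst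
  rw [norm_one_sub_norm hz, ← Real.log_le_log_iff (by positivity) (norm_pos_iff.mpr hne),
    Real.log_mul hpos.ne' (Real.exp_ne_zero _), Real.log_exp]
  linarith

/-- The previous inequality at `z, z ^ 2, z ^ 3, …`, multiplied together; the exponents sum to a
difference of geometric series. -/
theorem norm_eulerProd_norm_mul_exp_le {z : ℂ} (hz : ‖z‖ < 1) :
    ‖eulerProd ‖z‖‖ * Real.exp ((1 - ‖z‖)⁻¹ - (1 - z)⁻¹.re) ≤ ‖eulerProd z‖ := by
  have hr : ‖(‖z‖ : ℂ)‖ < 1 := by simpa using hz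
  have hgap := (hasSum_geometric_of_lt_one (norm_nonneg z) hz).sub
    (Complex.hasSum_re (hasSum_geometric_of_norm_lt_one hz))
  rw [← hasSum_nat_add_iff' 1] at hgap
  simp only [sum_range_one, pow_zero, one_re, sub_self, sub_zero] at hgap
  refine le_of_tendsto_of_tendsto' ((tendsto_prod_eulerProd hr).norm.mul
    ((Real.continuous_exp.tendsto _).comp hgap.tendsto_sum_nat))
    (tendsto_prod_eulerProd hz).norm fun N ↦ ?_
  simp only [Function.comp_apply, norm_prod, Real.exp_sum, ← prod_mul_distrib]
  refine prod_le_prod (fun i _ ↦ by positivity) fun i _ ↦ ?_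
  simpa using norm_one_sub_norm_mul_exp_le (norm_pow_succ_lt_one hz i)

lemma inv_one_sub_norm_sub_re_inv_one_sub {z : ℂ} (hz : ‖z‖ < 1) :
    (1 - ‖z‖)⁻¹ - (1 - z)⁻¹.re = (1 + ‖z‖) * (‖z‖ - z.re) /
      ((1 - ‖z‖) * ((1 - ‖z‖) ^ 2 + 2 * (‖z‖ - z.re))) := by
  have hpos : 0 < 1 - ‖z‖ := sub_pos.mpr hz
  have hgap : 0 ≤ ‖z‖ - z.re := sub_nonneg.mpr (re_le_norm z)
  have hnormSq : normSq (1 - z) = (1 - ‖z‖) ^ 2 + 2 * (‖z‖ - z.re) := by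
    have hsq := Complex.sq_norm z
    rw [normSq_apply] at hsq ⊢
    simp only [sub_re, one_re, sub_im, one_im]
    linear_combination -hsq
  rw [inv_re, hnormSq, sub_re, one_re]
  have hne : (1 - ‖z‖) ^ 2 + 2 * (‖z‖ - z.re) ≠ 0 := by positivity
  field_simp
  ring

lemma div_le_inv_one_sub_norm_sub_re {z : ℂ} (hz : ‖z‖ < 1) {t y : ℝ} (ht : 1 - ‖z‖ ≤ t)
    (hy : 0 ≤ y) (hyz : y ≤ ‖z‖ - z.re) :
    y / (t * (t ^ 2 + 2 * y)) ≤ (1 - ‖z‖)⁻¹ - (1 - z)⁻¹.re := by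
  rw [inv_one_sub_norm_sub_re_inv_one_sub hz]
  have hpos : 0 < 1 - ‖z‖ := sub_pos.mpr hz
  have ht0 : 0 < t := hpos.trans_le ht
  have hd : 0 ≤ ‖z‖ - z.re := hy.trans hyz
  have hsum : ‖z‖ - z.re ≤ (1 + ‖z‖) * (‖z‖ - z.re) := by nlinarith [norm_nonneg z]
  calc y / (t * (t ^ 2 + 2 * y)) ≤ (‖z‖ - z.re) / (t * (t ^ 2 + 2 * (‖z‖ - z.re))) := by
        rw [div_le_div_iff₀ (by positivity) (by positivity)]
        nlinarith [mul_le_mul_of_nonneg_left hyz (by positivity : 0 ≤ t ^ 3)]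
    _ ≤ (1 + ‖z‖) * (‖z‖ - z.re) / ((1 - ‖z‖) * ((1 - ‖z‖) ^ 2 + 2 * (‖z‖ - z.re))) := by
        gcongr

lemma sq_div_le_exp_neg_sub_re {w : ℂ} (hre : w.re ≤ 1) (him : |w.im| ≤ π) :
    w.im ^ 2 / 24 ≤ Real.exp (-w.re) - (cexp (-w)).re := by
  have hexp : 1 / 3 ≤ Real.exp (-w.re) := by
    rw [Real.exp_neg, one_div]
    gcongr
    linarith [Real.exp_le_exp.mpr hre, Real.exp_one_lt_d9]
  have hcos : w.im ^ 2 / 8 ≤ 1 - Real.cos w.im := by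
    have hpi : w.im ^ 2 / 8 ≤ 2 / π ^ 2 * w.im ^ 2 := by
      have : π ^ 2 ≤ 4 ^ 2 := by gcongr; exact Real.pi_le_four
      rw [div_mul_eq_mul_div, div_le_div_iff₀ (by norm_num) (by positivity)]
      nlinarith [sq_nonneg w.im]
    linarith [Real.cos_le_one_sub_mul_cos_sq him]
  calc w.im ^ 2 / 24 = 1 / 3 * (w.im ^ 2 / 8) := by ring
    _ ≤ Real.exp (-w.re) * (1 - Real.cos w.im) := by gcongr
    _ = Real.exp (-w.re) - (cexp (-w)).re := by
      rw [exp_re, neg_re, neg_im, Real.cos_neg]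
      ring

lemma norm_inv_eulerProd_exp_neg_le {w : ℂ} (hpos : 0 < w.re) (hre : w.re ≤ 1)
    (him : |w.im| ≤ π) :
    ‖(eulerProd (cexp (-w)))⁻¹‖ ≤ ‖(eulerProd (cexp (-w.re)))⁻¹‖ *
      Real.exp (-(w.im ^ 2 / (24 * (w.re * normSq w)))) := by
  have hnorm : ‖cexp (-w)‖ = Real.exp (-w.re) := by rw [Complex.norm_exp, neg_re]
  have hlt := norm_exp_neg_lt_one hpos
  have hgap : w.im ^ 2 / (24 * (w.re * normSq w)) ≤
      (1 - ‖cexp (-w)‖)⁻¹ - (1 - cexp (-w))⁻¹.re := by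
    refine le_trans ?_ (div_le_inv_one_sub_norm_sub_re hlt (t := w.re) (y := w.im ^ 2 / 24)
      ?_ (by positivity) (hnorm ▸ sq_div_le_exp_neg_sub_re hre him))
    · rw [← div_div]
      gcongr
      rw [normSq_apply]
      nlinarith [sq_nonneg w.im]
    · linarith [Real.add_one_le_exp (-w.re)]
  have hP : 0 < ‖eulerProd (cexp (-w.re))‖ := by
    simpa using eulerProd_ne_zero (norm_exp_neg_lt_one (w := w.re) (by simpa using hpos))
  have hle := norm_eulerProd_norm_mul_exp_le hlt
  rw [hnorm, ofReal_exp, ofReal_neg] at hle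
  rw [norm_inv, norm_inv, Real.exp_neg, ← mul_inv]
  gcongr
  exact le_trans (by gcongr; exact hnorm ▸ hgap) hle

/-- The exponent is only of size `1 / a` once `v * a ≥ 1`; the bound on `v * a ^ 3`, which on the
saddle path expresses `|θ| ≤ π`, turns this back into decay in `v`. -/
lemma one_add_le_mul_exp {a v : ℝ} (ha : 0 ≤ a) (hv : 0 ≤ v) (h : v * a ^ 3 ≤ 16) :
    1 + v ≤ 17 * (1 + 24 ^ 4) * Real.exp (v / (24 * (1 + v * a))) := by
  set x := v / (24 * (1 + v * a)) with hx
  have hx0 : 0 ≤ x := by positivity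
  have hcube : (1 + v * a) ^ 3 ≤ 4 * (1 + 16 * v ^ 2) := by
    have hpow : (1 + v * a) ^ 3 ≤ 4 * (1 + (v * a) ^ 3) := by
      nlinarith [mul_nonneg (by positivity : 0 ≤ 1 + v * a) (sq_nonneg (1 - v * a))]
    nlinarith [mul_le_mul_of_nonneg_left h (sq_nonneg v)]
  have hratio : v ^ 3 ≤ (24 ^ 3 * x ^ 3) * (4 * (1 + 16 * v ^ 2)) := by
    calc v ^ 3 = 24 ^ 3 * x ^ 3 * (1 + v * a) ^ 3 := by
          rw [hx]
          field_simp
      _ ≤ (24 ^ 3 * x ^ 3) * (4 * (1 + 16 * v ^ 2)) := by gcongr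
  have hexp : x ^ 3 / 6 ≤ Real.exp x := Real.pow_div_factorial_le_exp x hx0 3
  have hone : 1 ≤ Real.exp x := Real.one_le_exp hx0
  have hlead : v ^ 3 ≤ 24 ^ 4 * Real.exp x * (1 + 16 * v ^ 2) := by nlinarith [sq_nonneg v]
  have hquad : (1 + v) * (1 + 16 * v ^ 2) ≤ 17 * (1 + 16 * v ^ 2 + v ^ 3) := by
    nlinarith [sq_nonneg (v - 1), pow_nonneg hv 3]
  refine le_of_mul_le_mul_right (a := 1 + 16 * v ^ 2) ?_ (by positivity)
  calc (1 + v) * (1 + 16 * v ^ 2) ≤ 17 * (1 + 16 * v ^ 2 + v ^ 3) := hquad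
    _ ≤ 17 * (Real.exp x * (1 + 16 * v ^ 2) + 24 ^ 4 * Real.exp x * (1 + 16 * v ^ 2)) := by
      gcongr
      exact le_mul_of_one_le_left (by positivity) hone
    _ = 17 * (1 + 24 ^ 4) * Real.exp x * (1 + 16 * v ^ 2) := by ring

lemma norm_scaledIntegrand {s : ℝ} (hs : 0 < s) (u : ℝ) :
    ‖scaledIntegrand s u‖ = √(2 * π) / s * Real.exp (-(π ^ 2 / (3 * s ^ 2))) *
      (‖(eulerProd (cexp (-saddlePath s u)))⁻¹‖ * Real.exp (π ^ 2 / (6 * s ^ 4) * s ^ 2)) := by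
  have hexp : ‖cexp (π ^ 2 / (6 * s ^ 4) * saddlePath s u)‖ =
      Real.exp (π ^ 2 / (6 * s ^ 4) * s ^ 2) := by
    rw [Complex.norm_exp, show (π ^ 2 / (6 * s ^ 4) : ℂ) = (π ^ 2 / (6 * s ^ 4) : ℝ) by
      push_cast; rfl, re_ofReal_mul, saddlePath_re]
  rw [scaledIntegrand, norm_mul, norm_mul, norm_mul, hexp, Complex.norm_real, Complex.norm_real,
    Real.norm_of_nonneg (by positivity), Real.norm_of_nonneg (by positivity)]

theorem norm_scaledIntegrand_le {s u : ℝ} (hs : 0 < s) (hs1 : s ≤ 1) (hu : |u * s ^ 3| ≤ π) :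
    ‖scaledIntegrand s u‖ ≤
      ‖scaledIntegrand s 0‖ * (17 * (1 + 24 ^ 4) * (1 + u ^ 2)⁻¹) := by
  have hcenter : saddlePath s 0 = (saddlePath s u).re := by
    rw [saddlePath_re]
    simp [saddlePath]
  have hre : 0 < (saddlePath s u).re := by
    rw [saddlePath_re]
    positivity
  have hexponent : (saddlePath s u).im ^ 2 /
      (24 * ((saddlePath s u).re * normSq (saddlePath s u))) =
      u ^ 2 / (24 * (1 + u ^ 2 * s ^ 2)) := by
    rw [saddlePath_im, saddlePath_re, normSq_saddlePath]
    field_simp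
  have hus : u ^ 2 * (s ^ 2) ^ 3 ≤ 16 := by
    calc u ^ 2 * (s ^ 2) ^ 3 = |u * s ^ 3| ^ 2 := by rw [sq_abs]; ring
      _ ≤ 4 ^ 2 := by gcongr; exact hu.trans Real.pi_le_four
      _ = 16 := by norm_num
  have hdecay : Real.exp (-(u ^ 2 / (24 * (1 + u ^ 2 * s ^ 2)))) ≤
      17 * (1 + 24 ^ 4) * (1 + u ^ 2)⁻¹ := by
    rw [Real.exp_neg, ← div_eq_mul_inv, le_div_iff₀ (by positivity),
      inv_mul_le_iff₀ (Real.exp_pos _), mul_comm]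
    exact one_add_le_mul_exp (sq_nonneg s) (sq_nonneg u) hus
  have hP := norm_inv_eulerProd_exp_neg_le hre (by simpa [abs_of_pos hs])
    (by simpa using hu)
  rw [hexponent, ← hcenter] at hP
  calc ‖scaledIntegrand s u‖
      ≤ ‖scaledIntegrand s 0‖ * Real.exp (-(u ^ 2 / (24 * (1 + u ^ 2 * s ^ 2)))) := by
        rw [norm_scaledIntegrand hs, norm_scaledIntegrand hs, mul_assoc _ (_ * _),
          mul_right_comm _ (Real.exp _) (Real.exp (-(u ^ 2 / _)))]
        gcongr
    _ ≤ _ := by gcongr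

/-! ### The limit of the rescaled integral -/

lemma tendsto_integral_symm_of_dominated {ι E : Type*} [NormedAddCommGroup E] [NormedSpace ℝ E]
    {l : Filter ι} [l.IsCountablyGenerated] {a : ι → ℝ} {F : ι → ℝ → E} {f : ℝ → E} {g : ℝ → ℝ}
    (ha : Tendsto a l atTop) (hg : Integrable g)
    (hmeas : ∀ᶠ i in l, AEStronglyMeasurable (F i))
    (hbound : ∀ᶠ i in l, ∀ u, |u| ≤ a i → ‖F i u‖ ≤ g u)
    (hlim : ∀ u, Tendsto (fun i ↦ F i u) l (𝓝 (f u))) :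
    Tendsto (fun i ↦ ∫ u in (-a i)..(a i), F i u) l (𝓝 (∫ u, f u)) := by
  have hind : (fun i ↦ ∫ u, (Set.Ioc (-a i) (a i)).indicator (F i) u) =ᶠ[l]
      fun i ↦ ∫ u in (-a i)..(a i), F i u := by
    filter_upwards [ha.eventually_ge_atTop 0] with i hi
    rw [integral_indicator measurableSet_Ioc,
      intervalIntegral.integral_of_le (neg_le_self hi)]
  refine Tendsto.congr' hind (tendsto_integral_filter_of_dominated_convergence (fun u ↦ |g u|)
    ?_ ?_ hg.abs (Eventually.of_forall fun u ↦ ?_))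
  · filter_upwards [hmeas] with i hi using hi.indicator measurableSet_Ioc
  · filter_upwards [hbound] with i hi
    refine Eventually.of_forall fun u ↦ ?_
    by_cases hu : u ∈ Set.Ioc (-a i) (a i)
    · rw [Set.indicator_of_mem hu]
      exact (hi u (abs_le.mpr ⟨hu.1.le, hu.2⟩)).trans (le_abs_self _)
    · simp [Set.indicator_of_notMem hu]
  · refine (hlim u).congr' ?_
    filter_upwards [ha.eventually_gt_atTop |u|] with i hi
    obtain ⟨hlo, hhi⟩ := abs_lt.mp hi
    rw [Set.indicator_of_mem (Set.mem_Ioc.mpr ⟨hlo, hhi.le⟩)]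

lemma continuous_scaledIntegrand {s : ℝ} (hs : 0 < s) : Continuous (scaledIntegrand s) := by
  have hlt (u : ℝ) : ‖cexp (-saddlePath s u)‖ < 1 :=
    norm_exp_neg_lt_one (by simpa using pow_pos hs 2)
  have hpath : Continuous (saddlePath s) := by
    unfold saddlePath
    fun_prop
  have heuler : Continuous fun u ↦ eulerProd (cexp (-saddlePath s u)) :=
    continuousOn_eulerProd.comp_continuous (by fun_prop) fun u ↦ by simpa using hlt u
  exact continuous_const.mul ((heuler.inv₀ fun u ↦ eulerProd_ne_zero (hlt u)).mul (by fun_prop))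

theorem tendsto_integral_scaledIntegrand :
    Tendsto (fun s : ℝ ↦ ∫ u in (-(π / s ^ 3))..(π / s ^ 3), scaledIntegrand s u) (𝓝[>] 0)
      (𝓝 (√(6 / π) : ℝ)) := by
  have hgauss : ∫ u : ℝ, (Real.exp (-(π ^ 2 / 6) * u ^ 2) : ℂ) = (√(6 / π) : ℝ) := by
    rw [integral_complex_ofReal, integral_gaussian]
    congr 2
    field_simp
  have hradius : Tendsto (fun s : ℝ ↦ π / s ^ 3) (𝓝[>] 0) atTop := by
    simp_rw [div_eq_mul_inv, ← inv_pow]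
    exact ((tendsto_pow_atTop three_ne_zero).comp tendsto_inv_nhdsGT_zero).const_mul_atTop
      Real.pi_pos
  have hcenter : ∀ᶠ s in 𝓝[>] (0 : ℝ), ‖scaledIntegrand s 0‖ ≤ 2 :=
    (tendsto_scaledIntegrand 0).norm.eventually_le_const (by simp)
  have hle_one : ∀ᶠ s in 𝓝[>] (0 : ℝ), s ≤ 1 :=
    mem_nhdsWithin_of_mem_nhds (Iic_mem_nhds one_pos)
  rw [← hgauss]
  refine tendsto_integral_symm_of_dominated (g := fun u ↦ 2 * (17 * (1 + 24 ^ 4) * (1 + u ^ 2)⁻¹))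
    hradius ((integrable_inv_one_add_sq.const_mul _).const_mul 2) ?_ ?_ tendsto_scaledIntegrand
  · filter_upwards [self_mem_nhdsWithin] with s hs
      using (continuous_scaledIntegrand hs).aestronglyMeasurable
  · filter_upwards [self_mem_nhdsWithin, hle_one, hcenter] with s hs hs1 hs2 u hu
    have hs3 : 0 < s ^ 3 := pow_pos hs 3
    have hus : |u * s ^ 3| ≤ π := by
      rwa [abs_mul, abs_of_pos hs3, ← le_div_iff₀ hs3]
    exact (norm_scaledIntegrand_le hs hs1 hus).trans (by gcongr)

/-! ### The partition numbers -/

lemma inv_eulerProd_mul_exp_eq_scaledIntegrand {n : ℕ} {s : ℝ} (hs : 0 < s)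
    (hn : (n : ℝ) = π ^ 2 / (6 * s ^ 4)) (u : ℝ) :
    (eulerProd (cexp (-saddlePath s u)))⁻¹ * cexp (n * saddlePath s u) =
      (s / √(2 * π) * Real.exp (π ^ 2 / (3 * s ^ 2)) : ℝ) * scaledIntegrand s u := by
  have hn' : (n : ℂ) = π ^ 2 / (6 * s ^ 4) := by exact_mod_cast congrArg ((↑) : ℝ → ℂ) hn
  have hscale : s / √(2 * π) * Real.exp (π ^ 2 / (3 * s ^ 2)) *
      (√(2 * π) / s * Real.exp (-(π ^ 2 / (3 * s ^ 2)))) = 1 := by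
    rw [Real.exp_neg]
    field_simp
  rw [scaledIntegrand, ← hn', ← ofReal_mul, ← mul_assoc, ← ofReal_mul, hscale, ofReal_one, one_mul]

lemma card_partition_eq_integral_scaledIntegrand {n : ℕ} {s : ℝ} (hs : 0 < s)
    (hn : (n : ℝ) = π ^ 2 / (6 * s ^ 4)) :
    (Fintype.card (Nat.Partition n) : ℂ) =
      (s ^ 4 / (2 * π * √(2 * π)) * Real.exp (π ^ 2 / (3 * s ^ 2)) : ℝ) *
        ∫ u in (-(π / s ^ 3))..(π / s ^ 3), scaledIntegrand s u := by
  have hpi : (π : ℂ) ≠ 0 := ofReal_ne_zero.mpr Real.pi_ne_zero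
  have hcauchy := integral_inv_eulerProd_mul_exp (t := s ^ 2) (by positivity) n
  have hsubst := intervalIntegral.smul_integral_comp_mul_right
    (a := -(π / s ^ 3)) (b := π / s ^ 3)
    (fun θ : ℝ ↦ (eulerProd (cexp (-((s ^ 2 : ℝ) - θ * I))))⁻¹ *
      cexp (n * ((s ^ 2 : ℝ) - θ * I))) (s ^ 3)
  rw [neg_mul, div_mul_cancel₀ _ (by positivity), hcauchy] at hsubst
  simp_rw [← saddlePath_eq_sub_mul_I, inv_eulerProd_mul_exp_eq_scaledIntegrand hs hn] at hsubst
  rw [intervalIntegral.integral_const_mul, real_smul] at hsubst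
  refine mul_left_cancel₀ (mul_ne_zero two_ne_zero hpi) (hsubst.symm.trans ?_)
  push_cast
  field_simp

/-- The positive solution `s` of `n = π² / (6 s⁴)`, which places the saddle point `w = s²` of
Cauchy's integral for the `n`-th partition number. -/
noncomputable def saddleParam (n : ℕ) : ℝ := √(π / √(6 * n))

lemma saddleParam_pos {n : ℕ} (hn : n ≠ 0) : 0 < saddleParam n :=
  Real.sqrt_pos.mpr (by positivity)

lemma saddleParam_sq (n : ℕ) : saddleParam n ^ 2 = π / √(6 * n) :=
  Real.sq_sqrt (by positivity)

lemma saddleParam_pow_four (n : ℕ) : saddleParam n ^ 4 = π ^ 2 / (6 * n) := by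
  rw [show saddleParam n ^ 4 = (saddleParam n ^ 2) ^ 2 by ring, saddleParam_sq, div_pow,
    Real.sq_sqrt (by positivity)]

lemma tendsto_saddleParam : Tendsto saddleParam atTop (𝓝[>] 0) := by
  refine tendsto_nhdsWithin_iff.mpr ⟨?_, ?_⟩
  · have hroot : Tendsto (fun n : ℕ ↦ √(6 * (n : ℝ))) atTop atTop :=
      Real.tendsto_sqrt_atTop.comp (tendsto_natCast_atTop_atTop.const_mul_atTop (by norm_num))
    have hsqrt := (hroot.const_div_atTop π).sqrt
    rwa [Real.sqrt_zero] at hsqrt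
  · filter_upwards [eventually_ne_atTop 0] with n hn using saddleParam_pos hn

lemma sq_div_saddleParam_sq (n : ℕ) :
    π ^ 2 / (3 * saddleParam n ^ 2) = π * √(2 * n / 3) := by
  have hroot : √(2 * (n : ℝ) / 3) = √(6 * n) / 3 := by
    rw [show 2 * (n : ℝ) / 3 = 6 * n / 3 ^ 2 by ring, Real.sqrt_div (by positivity),
      Real.sqrt_sq (by norm_num)]
  rw [saddleParam_sq, hroot]
  field_simp

theorem card_partition_ratio_eq {n : ℕ} (hn : n ≠ 0) :
    ((Fintype.card (Nat.Partition n) * (4 * n * √3) / Real.exp (π * √(2 * n / 3)) : ℝ) : ℂ) =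
      (√(π / 6) : ℝ) * ∫ u in (-(π / saddleParam n ^ 3))..(π / saddleParam n ^ 3),
        scaledIntegrand (saddleParam n) u := by
  have hn' : (n : ℝ) ≠ 0 := Nat.cast_ne_zero.mpr hn
  have hsaddle : (n : ℝ) = π ^ 2 / (6 * saddleParam n ^ 4) := by
    rw [saddleParam_pow_four]
    field_simp
  have hconst : π ^ 2 / (6 * n) / (2 * π * √(2 * π)) * (4 * n * √3) = √(π / 6) := by
    have h6 : √(π / 6) = √π / (√2 * √3) := by
      rw [Real.sqrt_div Real.pi_pos.le, ← Real.sqrt_mul (by norm_num)]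
      norm_num
    rw [h6, Real.sqrt_mul (by norm_num)]
    field_simp
    rw [Real.sq_sqrt (by norm_num), Real.sq_sqrt Real.pi_pos.le]
    ring
  have hcard := card_partition_eq_integral_scaledIntegrand (saddleParam_pos hn) hsaddle
  rw [saddleParam_pow_four, sq_div_saddleParam_sq] at hcard
  have hexp : (Real.exp (π * √(2 * n / 3)) : ℂ) ≠ 0 := ofReal_ne_zero.mpr (Real.exp_ne_zero _)
  rw [ofReal_div, ofReal_mul, ofReal_natCast, hcard, div_eq_iff hexp, ← hconst, ofReal_mul,
    ofReal_mul _ (4 * n * √3)]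
  ring

end HardyRamanujan

/-- Hardy–Ramanujan asymptotic for the partition function:
`p(s) ∼ e^{π √(2s/3)} / (4 s √3)` as `s → ∞`, i.e. the ratio
`p(s) · 4 s √3 / e^{π √(2s/3)}` tends to 1. -/
theorem stmt15 :
    Filter.Tendsto (fun s : ℕ =>
      (Fintype.card (Nat.Partition s) : ℝ) * (4 * (s : ℝ) * Real.sqrt 3) /
        Real.exp (Real.pi * Real.sqrt (2 * (s : ℝ) / 3)))
      Filter.atTop (nhds 1) := by
  have hone : ((√(π / 6) : ℝ) : ℂ) * (√(6 / π) : ℝ) = (1 : ℝ) := by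
    rw [← ofReal_mul, ← Real.sqrt_mul (by positivity), div_mul_div_cancel₀ (by norm_num),
      div_self Real.pi_ne_zero, Real.sqrt_one]
  have hlim := (HardyRamanujan.tendsto_integral_scaledIntegrand.comp
    HardyRamanujan.tendsto_saddleParam).const_mul ((√(π / 6) : ℝ) : ℂ)
  rw [hone] at hlim
  refine tendsto_ofReal_iff.mp (hlim.congr' ?_)
  filter_upwards [eventually_ne_atTop 0] with n hn
    using (HardyRamanujan.card_partition_ratio_eq hn).symm
end
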